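/- arXiv:1909.11027 — 2 statements merged into one kernel-verified Lean document; each statement's English description precedes it below -/
import Mathlib

section
/- A sequence (Π_i)_{i∈ℕ} of permutations is quasirandom if and only if lim_{i→∞} d(π, Π_i) = 1/4! = 1/24 for every 4-permutation π. -/
open MeasureTheory Filter

noncomputable section

/-- A permuton: a Borel probability measure on `ℝ × ℝ` (supported on `[0,1]²`)
with uniform marginals. -/
def IsPermuton (μ : Measure (ℝ × ℝ)) : Prop :=
  IsProbabilityMeasure μ ∧
    (∀ x x' : ℝ, 0 ≤ x → x ≤ x' → x' ≤ 1 →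
      μ (Set.Icc x x' ×ˢ Set.Icc (0 : ℝ) 1) = ENNReal.ofReal (x' - x)) ∧
    (∀ y y' : ℝ, 0 ≤ y → y ≤ y' → y' ≤ 1 →
      μ (Set.Icc (0 : ℝ) 1 ×ˢ Set.Icc y y') = ENNReal.ofReal (y' - y))

/-- The uniform permuton: two-dimensional Lebesgue measure on `[0,1]²`. -/
def uniformPermuton : Measure (ℝ × ℝ) :=
  volume.restrict (Set.Icc (0 : ℝ) 1 ×ˢ Set.Icc (0 : ℝ) 1)

/-- The support of a Borel measure: all points each of whose open neighbourhoods has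
positive measure. -/
def measSupport (μ : Measure (ℝ × ℝ)) : Set (ℝ × ℝ) :=
  {p | ∀ U : Set (ℝ × ℝ), IsOpen U → p ∈ U → 0 < μ U}

/-- The pattern density of a `k`-permutation `π` in a measure `μ` on `ℝ × ℝ`:
the `μ^{⊗ k}`-probability that `k` sampled points, relabelled so that their
`x`-coordinates increase, have `y`-coordinates ordered according to `π`. -/
def PermutonDensity {k : ℕ} (π : Equiv.Perm (Fin k)) (μ : Measure (ℝ × ℝ)) : ℝ :=
  ((Measure.pi fun _ : Fin k => μ)
    {p : Fin k → ℝ × ℝ | ∃ σ : Equiv.Perm (Fin k),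
      StrictMono (fun i => (p (σ i)).1) ∧
        ∀ i j : Fin k, (p (σ i)).2 < (p (σ j)).2 ↔ π i < π j}).toReal

open scoped Classical in
/-- The pattern density of a `k`-permutation `π` in an `n`-permutation `Π`:
the proportion of `k`-element subsets of `Fin n` on which `Π` induces the pattern `π`
(zero when `n < k`). -/
def PatternDensity {k n : ℕ} (π : Equiv.Perm (Fin k)) (Perm : Equiv.Perm (Fin n)) : ℝ :=
  ((Finset.univ.filter fun A : Finset (Fin n) =>
      ∃ h : A.card = k, ∀ i j : Fin k,
        Perm ↑(A.orderIsoOfFin h i) < Perm ↑(A.orderIsoOfFin h j) ↔ π i < π j).card : ℝ) /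
    (n.choose k)

/-- A sequence of permutations (of varying orders) is quasirandom if the density of every
pattern `π` converges to `1/|π|!`. -/
def Quasirandom (P : ℕ → (n : ℕ) × Equiv.Perm (Fin n)) : Prop :=
  ∀ (k : ℕ) (π : Equiv.Perm (Fin k)),
    Tendsto (fun i => PatternDensity π (P i).2) atTop (nhds (1 / (Nat.factorial k : ℝ)))

/-- A set `S` of `k`-permutations is `Σ`-forcing if a sequence of permutations is quasirandom
exactly when the sum of the densities of the patterns from `S` converges to `|S|/k!`. -/
def SigmaForcing {k : ℕ} (S : Finset (Equiv.Perm (Fin k))) : Prop :=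
  ∀ P : ℕ → (n : ℕ) × Equiv.Perm (Fin n),
    Quasirandom P ↔
      Tendsto (fun i => ∑ π ∈ S, PatternDensity π (P i).2) atTop
        (nhds ((S.card : ℝ) / (Nat.factorial k : ℝ)))

/-- The `4`-permutation written in one-line notation as `(a+1)(b+1)(c+1)(d+1)`
(inputs are 0-indexed). -/
def mk4 (a b c d : Fin 4) (h : Function.Bijective ![a, b, c, d] := by decide) :
    Equiv.Perm (Fin 4) :=
  Equiv.ofBijective _ h

/-- A doubly stochastic matrix: non-negative entries, all row and column sums equal to one. -/
def IsDoublyStochastic {n : ℕ} (A : Matrix (Fin n) (Fin n) ℝ) : Prop :=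
  (∀ i j, 0 ≤ A i j) ∧ (∀ i, ∑ j, A i j = 1) ∧ (∀ j, ∑ i, A i j = 1)

/-- The step permuton `μ[A]` associated with an `n × n` doubly stochastic matrix `A`. -/
def stepPermuton {n : ℕ} (A : Matrix (Fin n) (Fin n) ℝ) : Measure (ℝ × ℝ) :=
  ∑ i : Fin n, ∑ j : Fin n,
    ENNReal.ofReal (A i j * n) •
      volume.restrict
        (Set.Ico ((i : ℝ) / n) (((i : ℝ) + 1) / n) ×ˢ
          Set.Ico ((j : ℝ) / n) (((j : ℝ) + 1) / n))

/-- The matrix `B^{ij}` (0-indexed: `p, q ∈ [n-1]`): `+1` at positions `(p,q)` and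
`(p+1,q+1)`, `-1` at positions `(p,q+1)` and `(p+1,q)`, `0` elsewhere. -/
def Bmat (n : ℕ) (p q : Fin (n - 1)) : Matrix (Fin n) (Fin n) ℝ := fun a b =>
  (if (a : ℕ) = (p : ℕ) ∧ (b : ℕ) = (q : ℕ) then 1 else 0) +
    (if (a : ℕ) = (p : ℕ) + 1 ∧ (b : ℕ) = (q : ℕ) + 1 then 1 else 0) -
    (if (a : ℕ) = (p : ℕ) ∧ (b : ℕ) = (q : ℕ) + 1 then 1 else 0) -
    (if (a : ℕ) = (p : ℕ) + 1 ∧ (b : ℕ) = (q : ℕ) then 1 else 0)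

/-- The matrix `A + ∑_{i,j} x_{ij} B^{ij}` where `A` is the `n × n` matrix with all
entries `1/n`. -/
def pertMatrix (n : ℕ) (x : Fin (n - 1) × Fin (n - 1) → ℝ) : Matrix (Fin n) (Fin n) ℝ :=
  fun a b => 1 / n + ∑ p : Fin (n - 1) × Fin (n - 1), x p * Bmat n p.1 p.2 a b

/-- The function `h_{S,n}`: the sum over `π ∈ S` of the pattern density of `π` in the
step permuton of the perturbed matrix. -/
def hSN (n : ℕ) (S : Finset (Equiv.Perm (Fin 4))) (x : Fin (n - 1) × Fin (n - 1) → ℝ) : ℝ :=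
  ∑ π ∈ S, PermutonDensity π (stepPermuton (pertMatrix n x))

open scoped Classical in
/-- The cover matrix of a set `S` of `4`-permutations: `C i j` is the number of `π ∈ S`
with `π j = i`. -/
def coverMatrix (S : Finset (Equiv.Perm (Fin 4))) : Fin 4 → Fin 4 → ℕ := fun i j =>
  (S.filter fun π => π j = i).card

/-- The eight symmetry operations on `4`-permutations. -/
def symOps : List (Equiv.Perm (Fin 4) → Equiv.Perm (Fin 4)) :=
  [fun σ => σ,
   fun σ => σ * Fin.revPerm,
   fun σ => Fin.revPerm * σ,
   fun σ => Fin.revPerm * σ * Fin.revPerm,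
   fun σ => σ⁻¹,
   fun σ => σ⁻¹ * Fin.revPerm,
   fun σ => Fin.revPerm * σ⁻¹,
   fun σ => Fin.revPerm * σ⁻¹ * Fin.revPerm]

open scoped Classical in
/-- `T` is symmetric to `S` if one of the eight symmetry operations maps `S` onto `T`. -/
def SymmetricSets (S T : Finset (Equiv.Perm (Fin 4))) : Prop :=
  ∃ op ∈ symOps, T = S.image op

end

/-! Sums of `f (a) * g (Q ∘ a)` over all `k`-tuples `a` of positions, where `f` and `g` depend only
on how the entries of a tuple compare, are linear combinations of the `k`-densities of `Q`. The mean
square of the discrepancy of `Q`, its deviation from the uniform distribution on corner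
rectangles, is bounded by such sums over quadruples, up to lower order terms. Hence convergence of
the `4`-densities to `1 / 24` forces the mean square discrepancy to tend to zero. As the
discrepancy is a Lipschitz function of the corner, its supremum then tends to zero as well. In the
count of the occurrences of a pattern, the values of `Q` along an increasing tuple can therefore
be replaced one at a time by free values: those admissible for one entry form an interval, so each
replacement costs an error of the order of the discrepancy. After all replacements the count is
that of a random permutation.

That the orders tend to infinity has to be proved as well: no single permutation has all its
`4`-densities equal to `1 / 24`, so each permutation occurs only finitely often in the sequence. -/

namespace PermPattern

open Finset Topology

/-- The Iverson bracket: `1` if `p` holds and `0` otherwise. -/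
noncomputable def iverson (p : Prop) : ℝ :=
  open scoped Classical in if p then 1 else 0

local notation "𝟙[" p "]" => iverson p

section Iverson

variable {p q : Prop}

theorem iverson_of_true (h : p) : 𝟙[p] = 1 := if_pos h

theorem iverson_of_false (h : ¬p) : 𝟙[p] = 0 := if_neg h

theorem iverson_congr (h : p ↔ q) : 𝟙[p] = 𝟙[q] := congrArg iverson (propext h)

theorem iverson_nonneg : 0 ≤ 𝟙[p] := by
  by_cases h : p <;> simp [iverson, h]

theorem iverson_le_one : 𝟙[p] ≤ 1 := by
  by_cases h : p <;> simp [iverson, h]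

theorem iverson_mono (h : p → q) : 𝟙[p] ≤ 𝟙[q] := by
  by_cases hp : p
  · rw [iverson_of_true hp, iverson_of_true (h hp)]
  · rw [iverson_of_false hp]
    exact iverson_nonneg

theorem iverson_mul_iverson : 𝟙[p] * 𝟙[q] = 𝟙[p ∧ q] := by
  by_cases hp : p <;> by_cases hq : q <;> simp [iverson, hp, hq]

theorem sum_iverson {α : Type*} (s : Finset α) (p : α → Prop) [DecidablePred p] :
    ∑ x ∈ s, 𝟙[p x] = #{x ∈ s | p x} := by
  rw [← sum_boole]
  exact sum_congr rfl fun x _ => by by_cases h : p x <;> simp [iverson, h]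

end Iverson

/-! ### Order isomorphic tuples -/

section OrderIsomorphic

variable {ι κ α β γ : Type*}

/-- Two tuples are order isomorphic if their entries compare in the same way. A permutation of
`Fin k`, read as a `k`-tuple, is order isomorphic to exactly the tuples that induce it as their
pattern. -/
def OrderIsomorphic [LT α] [LT β] (u : ι → α) (v : ι → β) : Prop :=
  ∀ i j, u i < u j ↔ v i < v j

theorem OrderIsomorphic.symm [LT α] [LT β] {u : ι → α} {v : ι → β} (h : OrderIsomorphic u v) :
    OrderIsomorphic v u :=
  fun i j => (h i j).symm

theorem OrderIsomorphic.trans [LT α] [LT β] [LT γ] {u : ι → α} {v : ι → β} {w : ι → γ}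
    (huv : OrderIsomorphic u v) (hvw : OrderIsomorphic v w) : OrderIsomorphic u w :=
  fun i j => (huv i j).trans (hvw i j)

theorem OrderIsomorphic.comp [LT α] [LT β] {u : ι → α} {v : ι → β} (h : OrderIsomorphic u v)
    (b : κ → ι) : OrderIsomorphic (u ∘ b) (v ∘ b) :=
  fun i j => h (b i) (b j)

theorem perm_eq_of_orderIsomorphic {k : ℕ} {π π' : Equiv.Perm (Fin k)}
    (h : OrderIsomorphic π π') : π = π' := by
  have hmono : StrictMono (π' ∘ π.symm) := fun i j hij =>
    (h _ _).1 (by simpa using hij)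
  let e : Fin k ≃o Fin k :=
    hmono.orderIsoOfSurjective _ (π'.surjective.comp π.symm.surjective)
  have he : e = OrderIso.refl _ := Subsingleton.elim _ _
  ext i
  have hi : π' (π.symm (π i)) = π i := DFunLike.congr_fun he (π i)
  rw [← hi, Equiv.symm_apply_apply]

theorem exists_perm_orderIsomorphic {k : ℕ} [LinearOrder α] {v : Fin k → α}
    (hv : Function.Injective v) : ∃ π : Equiv.Perm (Fin k), OrderIsomorphic v π := by
  have hmono : StrictMono (v ∘ Tuple.sort v) :=
    (Tuple.monotone_sort v).strictMono_of_injective (hv.comp (Tuple.sort v).injective)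
  refine ⟨(Tuple.sort v)⁻¹, fun i j => ?_⟩
  simpa using hmono.lt_iff_lt (a := (Tuple.sort v)⁻¹ i) (b := (Tuple.sort v)⁻¹ j)

theorem strictMono_iff_orderIsomorphic_one {k : ℕ} [LinearOrder α] {v : Fin k → α} :
    StrictMono v ↔ OrderIsomorphic v (1 : Equiv.Perm (Fin k)) :=
  ⟨fun h _ _ => h.lt_iff_lt, fun h i j => (h i j).2⟩

theorem ordConnected_setOf_orderIsomorphic_update [DecidableEq ι] [LinearOrder α] [LT β]
    (v : ι → α) (w : ι → β) (m : ι) :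
    {x | OrderIsomorphic (Function.update v m x) w}.OrdConnected := by
  constructor
  intro x hx y hy z ⟨hxz, hzy⟩ i j
  have hx' := hx i j
  have hy' := hy i j
  by_cases hi : i = m <;> by_cases hj : j = m
  · subst hi hj
    simpa using hx'
  · subst hi
    simp only [Function.update_self, Function.update_of_ne hj] at hx' hy' ⊢
    exact ⟨fun h => hx'.1 (hxz.trans_lt h), fun h => hzy.trans_lt (hy'.2 h)⟩
  · subst hj
    simp only [Function.update_self, Function.update_of_ne hi] at hx' hy' ⊢
    exact ⟨fun h => hy'.1 (h.trans_le hzy), fun h => (hx'.2 h).trans_le hxz⟩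
  · simpa only [Function.update_of_ne hi, Function.update_of_ne hj] using hx'

/-- A function of a tuple of natural numbers that depends only on how the entries compare. -/
def OrderInvariant (f : (ι → ℕ) → ℝ) : Prop :=
  ∀ u v : ι → ℕ, OrderIsomorphic u v → f u = f v

end OrderIsomorphic

/-! ### Pattern densities as averages over increasing tuples -/

section PatternDensity

variable {k n : ℕ}

theorem sum_map_orderEmbedding {M : Type*} [AddCommMonoid M] (F : Finset (Fin n) → M) :
    ∑ e : Fin k ↪o Fin n, F (univ.map e.toEmbedding) = ∑ A ∈ powersetCard k univ, F A := by
  refine sum_bij (fun e _ => univ.map e.toEmbedding) (fun e _ => by simp)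
    (fun e _ e' _ h => ?_) (fun A hA => ?_) fun _ _ => rfl
  · rw [← OrderEmbedding.range_inj, ← Set.image_univ, ← Set.image_univ]
    simpa using congrArg (fun A : Finset (Fin n) => (A : Set (Fin n))) h
  · exact ⟨A.orderEmbOfFin (mem_powersetCard_univ.1 hA), mem_univ _, map_orderEmbOfFin_univ A _⟩

theorem card_orderEmbedding_fin : Fintype.card (Fin k ↪o Fin n) = n.choose k := by
  simpa only [sum_const, smul_eq_mul, mul_one, card_univ, card_powersetCard, Fintype.card_fin] using
    sum_map_orderEmbedding (M := ℕ) (k := k) (n := n) fun _ => 1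

theorem orderEmbOfFin_map_univ (e : Fin k ↪o Fin n) (h : #(univ.map e.toEmbedding) = k) :
    ⇑((univ.map e.toEmbedding).orderEmbOfFin h) = e :=
  (orderEmbOfFin_unique h (by simp) e.strictMono).symm

theorem sum_iverson_orderIsomorphic (π : Equiv.Perm (Fin k)) (Q : Equiv.Perm (Fin n)) :
    ∑ e : Fin k ↪o Fin n, 𝟙[OrderIsomorphic (Q ∘ e) π] = n.choose k * PatternDensity π Q := by
  classical
  have hcount : ∑ e : Fin k ↪o Fin n, 𝟙[OrderIsomorphic (Q ∘ e) π] =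
      #{A : Finset (Fin n) | ∃ h : #A = k, ∀ i j : Fin k,
        Q ↑(A.orderIsoOfFin h i) < Q ↑(A.orderIsoOfFin h j) ↔ π i < π j} := by
    rw [← sum_iverson, ← sum_subset (subset_univ (powersetCard k univ)) fun A _ hA =>
      iverson_of_false fun ⟨h, _⟩ => hA (mem_powersetCard_univ.2 h), ← sum_map_orderEmbedding]
    refine sum_congr rfl fun e _ => iverson_congr ?_
    have hcard : #(univ.map e.toEmbedding) = k := by simp
    simp only [hcard, exists_true_left, coe_orderIsoOfFin_apply, orderEmbOfFin_map_univ]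
    rfl
  rw [hcount, PatternDensity]
  refine (mul_div_cancel_of_imp' fun hchoose => ?_).symm
  rw [← hcount]
  rw [← card_orderEmbedding_fin, Nat.cast_eq_zero, Fintype.card_eq_zero_iff] at hchoose
  simp

theorem sum_orderEmbedding {G : (Fin k → ℕ) → ℝ} (hG : OrderInvariant G)
    (Q : Equiv.Perm (Fin n)) :
    ∑ e : Fin k ↪o Fin n, G (fun i => Q (e i)) =
      n.choose k * ∑ π : Equiv.Perm (Fin k), PatternDensity π Q * G (fun i => π i) := by
  have expand : ∀ e : Fin k ↪o Fin n, G (fun i => Q (e i)) =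
      ∑ π : Equiv.Perm (Fin k), 𝟙[OrderIsomorphic (Q ∘ e) π] * G (fun i => π i) := by
    intro e
    obtain ⟨π, hπ⟩ := exists_perm_orderIsomorphic (Q.injective.comp e.injective)
    rw [sum_eq_single π, iverson_of_true hπ, one_mul]
    · exact hG _ _ hπ
    · intro π' _ hne
      rw [iverson_of_false fun h => hne (perm_eq_of_orderIsomorphic (h.symm.trans hπ)), zero_mul]
    · exact fun h => absurd (mem_univ π) h
  simp_rw [expand, mul_sum, ← mul_assoc, ← sum_iverson_orderIsomorphic, sum_mul]
  exact sum_comm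

end PatternDensity

/-! ### Transferring sums over tuples to pattern densities -/

section TupleSum

variable {ι : Type*} [Fintype ι] {k n : ℕ}

/-- The number of `k`-subsets of an `n`-set that contain all entries of a fixed tuple,
provided that the tuple has at most `k` distinct entries. -/
def supersetCount {α : Type*} [DecidableEq α] (n k : ℕ) (a : ι → α) : ℕ :=
  (n - #(univ.image a)).choose (k - #(univ.image a))

theorem supersetCount_comp {α β : Type*} [DecidableEq α] [DecidableEq β] {e : β → α}
    (he : Function.Injective e) (b : ι → β) :
    supersetCount n k (e ∘ b) = supersetCount n k b := by
  rw [supersetCount, supersetCount, ← image_image, card_image_of_injective _ he]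

theorem supersetCount_pos {α : Type*} [DecidableEq α] (hkn : k ≤ n) (a : ι → α) :
    0 < supersetCount n k a :=
  Nat.choose_pos (Nat.sub_le_sub_right hkn _)

theorem card_filter_subset_powersetCard_univ {α : Type*} [Fintype α] [DecidableEq α]
    {s : Finset α} (hs : #s ≤ k) :
    #{t ∈ powersetCard k univ | s ⊆ t} = (Fintype.card α - #s).choose (k - #s) := by
  rw [← card_compl, ← card_powersetCard]
  refine card_nbij' (· \ s) (· ∪ s) (fun t ht => ?_) (fun t ht => ?_) (fun t ht => ?_)
    (fun t ht => ?_)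
  · simp only [coe_filter, mem_powersetCard_univ, Set.mem_ofPred_eq] at ht
    simp [mem_powersetCard, card_sdiff_of_subset ht.2, ht.1, subset_compl_iff_disjoint_right,
      sdiff_disjoint]
  · obtain ⟨hdisj, hcard⟩ := mem_powersetCard.1 ht
    rw [subset_compl_iff_disjoint_right] at hdisj
    simp [card_union_of_disjoint hdisj, hcard, hs]
  · simp only [coe_filter, Set.mem_ofPred_eq] at ht
    exact sdiff_union_of_subset ht.2
  · exact union_sdiff_cancel_right
      (subset_compl_iff_disjoint_right.1 (mem_powersetCard.1 ht).1)

theorem sum_iverson_subset_range {s : Finset (Fin n)} (hs : #s ≤ k) :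
    ∑ e : Fin k ↪o Fin n, 𝟙[(s : Set (Fin n)) ⊆ Set.range e] =
      (n - #s).choose (k - #s) := by
  have hsupersets := card_filter_subset_powersetCard_univ hs
  rw [Fintype.card_fin] at hsupersets
  rw [← hsupersets, ← sum_iverson (powersetCard k univ), ← sum_map_orderEmbedding]
  refine sum_congr rfl fun e _ => iverson_congr ?_
  simp [← coe_subset]

theorem sum_iverson_range_subset_mul [DecidableEq ι] {α β : Type*} [Fintype α] [DecidableEq α]
    [Fintype β] {e : β → α} (he : Function.Injective e) (ψ : (ι → α) → ℝ) :
    ∑ a, 𝟙[↑(univ.image a) ⊆ Set.range e] * ψ a = ∑ b : ι → β, ψ (e ∘ b) := by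
  simp only [coe_image, coe_univ, Set.image_univ]
  symm
  refine Fintype.sum_of_injective (e ∘ ·) he.comp_left _ _ (fun a ha => ?_) fun b => ?_
  · rw [iverson_of_false fun h => ha ?_, zero_mul]
    choose b hb using fun i => h (Set.mem_range_self i)
    exact ⟨b, funext hb⟩
  · rw [iverson_of_true (Set.range_comp_subset_range b e), one_mul]

/-- Both sides count the pairs of a tuple `a` and an increasing `k`-tuple `e` through the entries
of `a`: on the right, `e` is chosen first, and then the position `b` of `a` inside `e`. -/
theorem sum_tuple_mul [DecidableEq ι] {f g : (ι → ℕ) → ℝ} (hf : OrderInvariant f)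
    (hg : OrderInvariant g) (hι : Fintype.card ι ≤ k) (hkn : k ≤ n) (Q : Equiv.Perm (Fin n)) :
    ∑ a : ι → Fin n, f (fun i => a i) * g (fun i => Q (a i)) =
      n.choose k * ∑ π : Equiv.Perm (Fin k), PatternDensity π Q *
        ∑ b : ι → Fin k, f (fun i => b i) * g (fun i => π (b i)) / supersetCount n k b := by
  calc ∑ a : ι → Fin n, f (fun i => a i) * g (fun i => Q (a i))
      = ∑ a : ι → Fin n, ∑ e : Fin k ↪o Fin n, 𝟙[↑(univ.image a) ⊆ Set.range e] *
          (f (fun i => a i) * g (fun i => Q (a i)) / supersetCount n k a) := by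
        refine sum_congr rfl fun a _ => ?_
        rw [← sum_mul, sum_iverson_subset_range (card_image_le.trans hι), ← supersetCount,
          mul_div_cancel₀ _ (Nat.cast_ne_zero.2 (supersetCount_pos hkn a).ne')]
    _ = ∑ e : Fin k ↪o Fin n, ∑ b : ι → Fin k,
          f (fun i => b i) * g (fun i => Q (e (b i))) / supersetCount n k b := by
        rw [sum_comm]
        refine sum_congr rfl fun e _ => ?_
        rw [sum_iverson_range_subset_mul e.injective]
        refine sum_congr rfl fun b _ => ?_
        rw [supersetCount_comp e.injective]
        congr 2
        exact hf _ _ fun i j => e.lt_iff_lt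
    _ = ∑ b : ι → Fin k, f (fun i => b i) / supersetCount n k b *
          ∑ e : Fin k ↪o Fin n, g (fun i => Q (e (b i))) := by
        rw [sum_comm]
        simp only [mul_sum, div_mul_eq_mul_div]
    _ = ∑ b : ι → Fin k, f (fun i => b i) / supersetCount n k b *
          (n.choose k * ∑ π : Equiv.Perm (Fin k), PatternDensity π Q * g (fun i => π (b i))) := by
        refine sum_congr rfl fun b _ => ?_
        rw [← sum_orderEmbedding (G := fun u => g fun i => u (b i))
          (fun u v huv => hg _ _ (huv.comp b))]
    _ = _ := by
        simp only [mul_sum]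
        rw [sum_comm]
        refine sum_congr rfl fun π _ => sum_congr rfl fun b _ => ?_
        ring

end TupleSum

/-! ### The orders tend to infinity -/

section Order

variable {ι : Type*} [Fintype ι] [DecidableEq ι] {k n : ℕ}

theorem sum_perm_comp_sq {F w : (ι → Fin k) → ℝ}
    (hw : ∀ (σ : Equiv.Perm (Fin k)) (b : ι → Fin k), w (σ ∘ b) = w b) :
    (k.factorial : ℝ) * ∑ π : Equiv.Perm (Fin k), ∑ b, F b * F (π ∘ b) / w b =
      ∑ b, (∑ π : Equiv.Perm (Fin k), F (π ∘ b)) ^ 2 / w b := by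
  have hshift : ∀ σ : Equiv.Perm (Fin k),
      ∑ π : Equiv.Perm (Fin k), ∑ b, F b * F (π ∘ b) / w b =
        ∑ b, F (σ ∘ b) * (∑ π : Equiv.Perm (Fin k), F (π ∘ b)) / w b := by
    intro σ
    rw [sum_comm, ← (Equiv.arrowCongr (Equiv.refl ι) σ).sum_comp]
    refine sum_congr rfl fun b _ => ?_
    rw [← Equiv.sum_comp (Equiv.mulRight σ) fun π => F (π ∘ b), mul_sum, sum_div]
    exact sum_congr rfl fun π _ => congrArg _ (hw σ b)
  calc (k.factorial : ℝ) * ∑ π : Equiv.Perm (Fin k), ∑ b, F b * F (π ∘ b) / w b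
      = ∑ _σ : Equiv.Perm (Fin k), ∑ π : Equiv.Perm (Fin k), ∑ b, F b * F (π ∘ b) / w b := by
        rw [sum_const, card_univ, Fintype.card_perm, Fintype.card_fin, nsmul_eq_mul]
    _ = ∑ b, (∑ π : Equiv.Perm (Fin k), F (π ∘ b)) ^ 2 / w b := by
        rw [sum_congr rfl fun σ _ => hshift σ, sum_comm]
        simp only [sq, sum_mul, sum_div]

theorem sum_perm_eq_zero_of_sum_tuple_eq_zero {f : (ι → ℕ) → ℝ} (hf : OrderInvariant f)
    (hι : Fintype.card ι ≤ k) (hkn : k ≤ n) {Q : Equiv.Perm (Fin n)}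
    (hQ : ∀ π : Equiv.Perm (Fin k), PatternDensity π Q = 1 / k.factorial)
    (hsum : ∑ a : ι → Fin n, f (fun i => a i) * f (fun i => Q (a i)) = 0) (b : ι → Fin k) :
    ∑ π : Equiv.Perm (Fin k), f (fun i => π (b i)) = 0 := by
  have hk : (k.factorial : ℝ) ≠ 0 := Nat.cast_ne_zero.2 k.factorial_ne_zero
  have hchoose : (n.choose k : ℝ) ≠ 0 := Nat.cast_ne_zero.2 (Nat.choose_pos hkn).ne'
  have hcount : ∀ b : ι → Fin k, 0 < (supersetCount n k b : ℝ) := fun b =>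
    Nat.cast_pos.2 (supersetCount_pos hkn b)
  have hsq : ∑ b : ι → Fin k,
      (∑ π : Equiv.Perm (Fin k), f (fun i => π (b i))) ^ 2 / supersetCount n k b = 0 := by
    refine (sum_perm_comp_sq (F := fun b : ι → Fin k => f fun i => b i)
      fun σ b => by rw [supersetCount_comp σ.injective]).symm.trans ?_
    rw [sum_tuple_mul hf hf hι hkn] at hsum
    simp only [hQ, ← mul_sum] at hsum
    exact mul_eq_zero_of_right _ <| (mul_eq_zero.1 <|
      (mul_eq_zero.1 hsum).resolve_left hchoose).resolve_left (one_div_ne_zero hk)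
  have hb := (sum_eq_zero_iff_of_nonneg fun b _ =>
    div_nonneg (sq_nonneg _) (hcount b).le).1 hsq b (mem_univ b)
  simpa [(hcount b).ne'] using hb

/-- The sign of the comparison of the two entries of a pair. -/
noncomputable def pairSign (u : Fin 2 → ℕ) : ℝ := 𝟙[u 0 < u 1] - 𝟙[u 1 < u 0]

theorem orderInvariant_pairSign : OrderInvariant pairSign := fun u v h => by
  rw [pairSign, pairSign, iverson_congr (h 0 1), iverson_congr (h 1 0)]

theorem sum_perm_pairSign (b : Fin 2 → Fin k) :
    ∑ π : Equiv.Perm (Fin k), pairSign (fun i => π (b i)) = 0 := by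
  have hrev : ∑ π : Equiv.Perm (Fin k), pairSign (fun i => π (b i)) =
      -∑ π : Equiv.Perm (Fin k), pairSign (fun i => π (b i)) := by
    rw [← sum_neg_distrib, ← Equiv.sum_comp (Equiv.mulLeft Fin.revPerm)]
    refine sum_congr rfl fun π _ => ?_
    simp only [pairSign, Equiv.coe_mulLeft, Equiv.Perm.mul_apply, Fin.revPerm_apply,
      Fin.val_fin_lt, Fin.rev_lt_rev, neg_sub]
  linarith

theorem sum_tuple_sumElim {α κ : Type*} [Fintype α] [Fintype κ] [DecidableEq κ]
    (F : (ι → α) → ℝ) (G : (κ → α) → ℝ) :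
    ∑ a : ι ⊕ κ → α, F (a ∘ Sum.inl) * G (a ∘ Sum.inr) = (∑ a, F a) * ∑ a, G a := by
  rw [sum_mul_sum, ← Fintype.sum_prod_type' (fun a b => F a * G b),
    ← (Equiv.sumArrowEquivProdArrow ι κ α).sum_comp]
  rfl

/-- If all `k`-densities were exactly `1 / k!`, the pair signs of positions and of values would be
uncorrelated over pairs, hence so would their tensor squares over quadruples, although the tensor
square of `pairSign` does not average to zero. -/
theorem exists_patternDensity_ne (hk : 4 ≤ k) (Q : Equiv.Perm (Fin n)) :
    ∃ π : Equiv.Perm (Fin k), PatternDensity π Q ≠ 1 / k.factorial := by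
  by_contra! hQ
  rcases lt_or_ge n k with hnk | hkn
  · have h1 := hQ 1
    rw [PatternDensity, Nat.choose_eq_zero_of_lt hnk, Nat.cast_zero, div_zero] at h1
    exact (one_div_pos.2 (Nat.cast_pos.2 k.factorial_pos)).ne h1
  have hpairs : ∑ a : Fin 2 → Fin n, pairSign (fun i => a i) * pairSign (fun i => Q (a i)) = 0 := by
    rw [sum_tuple_mul orderInvariant_pairSign orderInvariant_pairSign (by simp; omega) hkn]
    simp only [hQ, ← mul_sum]
    rw [sum_comm, sum_eq_zero fun b _ => ?_, mul_zero, mul_zero]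
    rw [← sum_div, ← mul_sum, sum_perm_pairSign, mul_zero, zero_div]
  let f : (Fin 2 ⊕ Fin 2 → ℕ) → ℝ := fun u => pairSign (u ∘ Sum.inl) * pairSign (u ∘ Sum.inr)
  have hf : OrderInvariant f := fun u v h => by
    simp only [f, orderInvariant_pairSign _ _ (h.comp Sum.inl),
      orderInvariant_pairSign _ _ (h.comp Sum.inr)]
  have hquadruples : ∑ a : Fin 2 ⊕ Fin 2 → Fin n, f (fun i => a i) * f (fun i => Q (a i)) = 0 := by
    let F : (Fin 2 → Fin n) → ℝ := fun a => pairSign (fun i => a i) * pairSign (fun i => Q (a i))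
    rw [← mul_zero (∑ a, F a), ← hpairs, ← sum_tuple_sumElim F F]
    exact sum_congr rfl fun a _ => mul_mul_mul_comm _ _ _ _
  let c : Fin 2 → Fin k := Fin.castLE (by omega)
  have hsq : ∑ π : Equiv.Perm (Fin k), pairSign (fun i => π (c i)) ^ 2 = 0 := by
    simp only [sq]
    exact sum_perm_eq_zero_of_sum_tuple_eq_zero hf (by simpa) hkn hQ hquadruples (Sum.elim c c)
  have hone := (sum_eq_zero_iff_of_nonneg fun _ _ => sq_nonneg _).1 hsq 1 (mem_univ _)
  have hc : pairSign (fun i => c i) = 1 := by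
    simp [pairSign, c, iverson]
  simp [hc] at hone

theorem tendsto_order_atTop (hk : 4 ≤ k) {P : ℕ → (n : ℕ) × Equiv.Perm (Fin n)}
    (hP : ∀ π : Equiv.Perm (Fin k),
      Tendsto (fun i => PatternDensity π (P i).2) atTop (𝓝 (1 / k.factorial))) :
    Tendsto (fun i => (P i).1) atTop atTop := by
  have hcofinite : Tendsto P atTop cofinite := by
    refine le_cofinite_iff_eventually_ne.2 fun p => eventually_map.2 ?_
    obtain ⟨π, hπ⟩ := exists_patternDensity_ne hk p.2
    filter_upwards [(hP π).eventually_ne hπ.symm] with i hi hip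
    exact hi (by rw [hip])
  have hfst : Tendsto (Sigma.fst : ((n : ℕ) × Equiv.Perm (Fin n)) → ℕ) cofinite atTop := by
    refine tendsto_atTop.2 fun N => ?_
    refine ((Set.finite_Iio N).biUnion fun m _ => Set.finite_range (Sigma.mk m)).subset ?_
    rintro ⟨m, Q⟩ hm
    simpa using hm
  exact hfst.comp hcofinite

end Order

/-! ### Limits of sums over tuples -/

section Limit

variable {k : ℕ}

theorem tendsto_choose_div_pow (k : ℕ) :
    Tendsto (fun n : ℕ => (n.choose k : ℝ) / n ^ k) atTop (𝓝 (1 / k.factorial)) := by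
  have hpow : ∀ᶠ n : ℕ in atTop, (n : ℝ) ^ k / k.factorial ≠ 0 := by
    filter_upwards [eventually_gt_atTop 0] with n hn
    positivity
  have hequiv := ((Asymptotics.isEquivalent_iff_tendsto_one hpow).1
    (isEquivalent_choose k)).mul_const (1 / k.factorial : ℝ)
  rw [one_mul] at hequiv
  refine hequiv.congr fun n => ?_
  have : (k.factorial : ℝ) ≠ 0 := Nat.cast_ne_zero.2 k.factorial_ne_zero
  simp only [Pi.div_apply]
  field_simp

theorem tendsto_choose_div_pow_of_lt {r : ℕ} (hr : r < k) :
    Tendsto (fun n : ℕ => (n.choose r : ℝ) / n ^ k) atTop (𝓝 0) := by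
  have hinv : Tendsto (fun n : ℕ => ((n : ℝ) ^ (k - r))⁻¹) atTop (𝓝 0) :=
    ((tendsto_pow_atTop (Nat.sub_ne_zero_of_lt hr)).comp
      tendsto_natCast_atTop_atTop).inv_tendsto_atTop
  rw [← mul_zero (1 / r.factorial : ℝ)]
  refine ((tendsto_choose_div_pow r).mul hinv).congr fun n => ?_
  rw [← div_eq_mul_inv, div_div, ← pow_add, Nat.add_sub_cancel' hr.le]

theorem tendsto_choose_div_supersetCount (b : Fin k → Fin k) :
    Tendsto (fun n : ℕ => (n.choose k : ℝ) / supersetCount n k b / n ^ k) atTop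
      (𝓝 (𝟙[Function.Injective b] / k.factorial)) := by
  set r := #(univ.image b)
  have hrk : r ≤ k := card_image_le.trans_eq (by simp)
  have hratio : ∀ᶠ n : ℕ in atTop, (n.choose r : ℝ) / n ^ k / k.choose r =
      (n.choose k : ℝ) / supersetCount n k b / n ^ k := by
    filter_upwards [eventually_ge_atTop k] with n hn
    have hmul : (n.choose k : ℝ) * k.choose r = n.choose r * supersetCount n k b := by
      exact_mod_cast Nat.choose_mul hrk
    have hcount : (supersetCount n k b : ℝ) ≠ 0 :=
      Nat.cast_ne_zero.2 (supersetCount_pos hn b).ne'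
    have hchoose : (k.choose r : ℝ) ≠ 0 := Nat.cast_ne_zero.2 (Nat.choose_pos hrk).ne'
    rw [div_right_comm, (div_eq_div_iff hchoose hcount).2 hmul.symm]
  refine Tendsto.congr' hratio ?_
  have hinj : Function.Injective b ↔ r = k := by
    simpa using (card_image_iff (s := univ) (f := b)).symm
  rcases hrk.lt_or_eq with hlt | heq
  · rw [iverson_of_false fun h => hlt.ne (hinj.1 h), zero_div, ← zero_div (k.choose r : ℝ)]
    exact (tendsto_choose_div_pow_of_lt hlt).div_const _
  · rw [iverson_of_true (hinj.2 heq), heq, Nat.choose_self, Nat.cast_one]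
    simpa using tendsto_choose_div_pow k

theorem sum_iverson_injective_mul (Φ : (Fin k → Fin k) → ℝ) :
    ∑ b, 𝟙[Function.Injective b] * Φ b = ∑ σ : Equiv.Perm (Fin k), Φ σ := by
  symm
  refine Fintype.sum_of_injective _ DFunLike.coe_injective _ _ (fun b hb => ?_) fun σ => ?_
  · rw [iverson_of_false fun h => hb ?_, zero_mul]
    exact ⟨Equiv.ofBijective b (Finite.injective_iff_bijective.1 h), rfl⟩
  · rw [iverson_of_true σ.injective, one_mul]

theorem sum_perm_sum_iverson_injective (F G : (Fin k → Fin k) → ℝ) :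
    ∑ π : Equiv.Perm (Fin k), ∑ b, 𝟙[Function.Injective b] * (F b * G (π ∘ b)) =
      (∑ σ : Equiv.Perm (Fin k), F σ) * ∑ π : Equiv.Perm (Fin k), G π := by
  have hshift : ∀ σ : Equiv.Perm (Fin k), ∑ π : Equiv.Perm (Fin k), G (π ∘ σ) =
      ∑ π : Equiv.Perm (Fin k), G π := fun σ =>
    Equiv.sum_comp (Equiv.mulRight σ) fun π : Equiv.Perm (Fin k) => G π
  simp only [sum_iverson_injective_mul fun b => F b * G (_ ∘ b)]
  rw [sum_comm, sum_mul]
  exact sum_congr rfl fun σ _ => by rw [← mul_sum, hshift]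

theorem tendsto_sum_tuple_div_pow {f g : (Fin k → ℕ) → ℝ} (hf : OrderInvariant f)
    (hg : OrderInvariant g) {P : ℕ → (n : ℕ) × Equiv.Perm (Fin n)}
    (hP : ∀ π : Equiv.Perm (Fin k),
      Tendsto (fun i => PatternDensity π (P i).2) atTop (𝓝 (1 / k.factorial)))
    (horder : Tendsto (fun i => (P i).1) atTop atTop) :
    Tendsto (fun i => (∑ a : Fin k → Fin (P i).1,
        f (fun j => a j) * g (fun j => (P i).2 (a j))) / (P i).1 ^ k) atTop
      (𝓝 ((∑ σ : Equiv.Perm (Fin k), f (fun j => σ j)) *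
        (∑ π : Equiv.Perm (Fin k), g (fun j => π j)) / k.factorial ^ 2)) := by
  have hexpand : ∀ᶠ i in atTop,
      ∑ π : Equiv.Perm (Fin k), PatternDensity π (P i).2 * ∑ b : Fin k → Fin k,
        f (fun j => b j) * g (fun j => π (b j)) *
          (((P i).1.choose k : ℝ) / supersetCount (P i).1 k b / (P i).1 ^ k) =
      (∑ a : Fin k → Fin (P i).1, f (fun j => a j) * g (fun j => (P i).2 (a j))) /
        (P i).1 ^ k := by
    filter_upwards [horder.eventually_ge_atTop k] with i hi
    rw [sum_tuple_mul hf hg (by simp) hi]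
    simp only [mul_sum, sum_div]
    exact sum_congr rfl fun π _ => sum_congr rfl fun b _ => by ring
  have hlimit : ∑ π : Equiv.Perm (Fin k), (1 / k.factorial : ℝ) * ∑ b : Fin k → Fin k,
      f (fun j => b j) * g (fun j => π (b j)) * (𝟙[Function.Injective b] / k.factorial) =
      (∑ σ : Equiv.Perm (Fin k), f (fun j => σ j)) *
        (∑ π : Equiv.Perm (Fin k), g (fun j => π j)) / k.factorial ^ 2 := by
    rw [← sum_perm_sum_iverson_injective (fun b => f fun j => b j) fun b => g fun j => b j]
    simp only [mul_sum, sum_div]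
    exact sum_congr rfl fun π _ => sum_congr rfl fun b _ => by
      simp only [Function.comp_apply]
      ring
  rw [← hlimit]
  exact Tendsto.congr' hexpand <| tendsto_finsetSum _ fun π _ => (hP π).mul <|
    tendsto_finsetSum _ fun b _ =>
      ((tendsto_choose_div_supersetCount b).comp horder).const_mul _

end Limit

/-! ### The discrepancy of a permutation in the mean square -/

section CornerCount

variable {n : ℕ}

/-- The number of points of the graph of `Q` in the corner rectangle `[0, x) × [0, y)`. -/
noncomputable def cornerCount (Q : Equiv.Perm (Fin n)) (x y : ℕ) : ℝ :=
  ∑ j : Fin n, 𝟙[(j : ℕ) < x] * 𝟙[(Q j : ℕ) < y]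

/-- The deviation of `cornerCount Q x y` from its value `x * y / n` for a uniformly spread
permutation. -/
noncomputable def discrepancy (Q : Equiv.Perm (Fin n)) (x y : ℕ) : ℝ :=
  cornerCount Q x y - x * y / n

theorem sum_iverson_lt {m : ℕ} (hm : m ≤ n) : ∑ j : Fin n, 𝟙[(j : ℕ) < m] = m := by
  rw [sum_iverson, Fin.card_filter_val_lt, min_eq_right hm]

theorem sum_iverson_lt_mul {j : ℕ} (hj : j < n) :
    ∑ x : Fin n, 𝟙[j < x] * (x : ℝ) = ((n : ℝ) * (n - 1) - j * (j + 1)) / 2 := by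
  rw [Fin.sum_univ_eq_sum_range fun x => 𝟙[j < x] * (x : ℝ)]
  induction n, hj using Nat.le_induction with
  | base =>
    rw [sum_eq_zero fun x hx => ?_]
    · push_cast
      ring
    · rw [iverson_of_false (Nat.lt_succ_iff.1 (mem_range.1 hx)).not_gt, zero_mul]
  | succ m hm ih =>
    rw [sum_range_succ, ih, iverson_of_true (Nat.lt_of_succ_le hm)]
    push_cast
    ring

theorem sum_fin_sq (n : ℕ) : ∑ x : Fin n, (x : ℝ) ^ 2 = (n : ℝ) * (n - 1) * (2 * n - 1) / 6 := by
  rw [Fin.sum_univ_eq_sum_range fun x => (x : ℝ) ^ 2]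
  induction n with
  | zero => simp
  | succ m ih =>
    rw [sum_range_succ, ih]
    push_cast
    ring

theorem sum_fin_mul_succ (n : ℕ) :
    ∑ x : Fin n, (x : ℝ) * (x + 1) = (n : ℝ) * (n - 1) * (n + 1) / 3 := by
  rw [Fin.sum_univ_eq_sum_range fun x => (x : ℝ) * (x + 1)]
  induction n with
  | zero => simp
  | succ m ih =>
    rw [sum_range_succ, ih]
    push_cast
    ring

theorem sum_cornerCount_mul (Q : Equiv.Perm (Fin n)) :
    ∑ x : Fin n, ∑ y : Fin n, cornerCount Q x y * (x * y) =
      ∑ j : Fin n, ((n : ℝ) * (n - 1) - j * (j + 1)) / 2 *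
        (((n : ℝ) * (n - 1) - Q j * (Q j + 1)) / 2) := by
  calc ∑ x : Fin n, ∑ y : Fin n, cornerCount Q x y * (x * y)
      = ∑ x : Fin n, ∑ j : Fin n, ∑ y : Fin n,
          𝟙[(j : ℕ) < x] * (x : ℝ) * (𝟙[(Q j : ℕ) < y] * (y : ℝ)) := by
        refine sum_congr rfl fun x _ => ?_
        simp only [cornerCount, sum_mul]
        rw [sum_comm]
        exact sum_congr rfl fun j _ => sum_congr rfl fun y _ => mul_mul_mul_comm ..
    _ = _ := by
        rw [sum_comm]
        refine sum_congr rfl fun j _ => ?_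
        rw [← sum_iverson_lt_mul j.is_lt, ← sum_iverson_lt_mul (Q j).is_lt, sum_mul_sum]

theorem le_sum_cornerCount_mul (Q : Equiv.Perm (Fin n)) :
    ((n : ℝ) ^ 2 * (n - 1) ^ 2 * (n - 2) / 3 + ∑ j : Fin n, ((j : ℝ) * Q j) ^ 2) / 4 ≤
      ∑ x : Fin n, ∑ y : Fin n, cornerCount Q x y * (x * y) := by
  have hsum : ∑ j : Fin n, (j : ℝ) * (j + 1) = (n : ℝ) * (n - 1) * (n + 1) / 3 :=
    sum_fin_mul_succ n
  have hsumQ : ∑ j : Fin n, (Q j : ℝ) * (Q j + 1) = (n : ℝ) * (n - 1) * (n + 1) / 3 :=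
    (Equiv.sum_comp Q fun j => (j : ℝ) * (j + 1)).trans hsum
  have hprod : ∑ j : Fin n, ((j : ℝ) * Q j) ^ 2 ≤
      ∑ j : Fin n, (j : ℝ) * (j + 1) * (Q j * (Q j + 1)) :=
    sum_le_sum fun j _ => by
      calc ((j : ℝ) * Q j) ^ 2 = (j * j) * (Q j * Q j) := by ring
        _ ≤ (j : ℝ) * (j + 1) * (Q j * (Q j + 1)) := by
          gcongr <;> exact le_add_of_nonneg_right zero_le_one
  have hexpand : ∑ x : Fin n, ∑ y : Fin n, cornerCount Q x y * (x * y) =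
      ((n : ℝ) * ((n : ℝ) * (n - 1)) ^ 2
        - (n : ℝ) * (n - 1) * ∑ j : Fin n, (j : ℝ) * (j + 1)
        - (n : ℝ) * (n - 1) * ∑ j : Fin n, (Q j : ℝ) * (Q j + 1)
        + ∑ j : Fin n, (j : ℝ) * (j + 1) * (Q j * (Q j + 1))) / 4 := by
    have hconst : (n : ℝ) * ((n : ℝ) * (n - 1)) ^ 2 = ∑ _j : Fin n, ((n : ℝ) * (n - 1)) ^ 2 := by
      simp
    rw [sum_cornerCount_mul, hconst, mul_sum, mul_sum, ← sum_sub_distrib, ← sum_sub_distrib,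
      ← sum_add_distrib, sum_div]
    exact sum_congr rfl fun j _ => by ring
  rw [hexpand, hsum, hsumQ]
  linarith

theorem sum_discrepancy_sq (Q : Equiv.Perm (Fin n)) :
    ∑ x : Fin n, ∑ y : Fin n, discrepancy Q x y ^ 2 =
      ∑ x : Fin n, ∑ y : Fin n, cornerCount Q x y ^ 2
        - 2 / n * ∑ x : Fin n, ∑ y : Fin n, cornerCount Q x y * (x * y)
        + ((n : ℝ) * (n - 1) * (2 * n - 1) / 6) ^ 2 / n ^ 2 := by
  rw [← sum_fin_sq, sq (∑ x : Fin n, (x : ℝ) ^ 2), sum_mul_sum]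
  simp only [mul_sum, sum_div, ← sum_sub_distrib, ← sum_add_distrib]
  exact sum_congr rfl fun x _ => sum_congr rfl fun y _ => by
    rw [discrepancy]
    ring

/-- The left-hand side is linear in `∑ j, (j * Q j) ^ 2`, which is not a sum over quadruples;
`0 ≤ (n * cornerCount Q i (Q i) - i * Q i) ^ 2` replaces it by quantities that are. -/
theorem sum_discrepancy_sq_le (hn : 0 < n) (Q : Equiv.Perm (Fin n)) :
    ∑ x : Fin n, ∑ y : Fin n, discrepancy Q x y ^ 2 ≤
      ∑ x : Fin n, ∑ y : Fin n, cornerCount Q x y ^ 2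
        - ∑ i : Fin n, cornerCount Q i (Q i) * i * Q i
        + n * (∑ i : Fin n, cornerCount Q i (Q i) ^ 2) / 2
        - (n : ℝ) ^ 4 / 18 + (n : ℝ) ^ 3 / 3 := by
  have hn' : (1 : ℝ) ≤ n := Nat.one_le_cast.2 hn
  have hsquare : 2 * n * ∑ i : Fin n, cornerCount Q i (Q i) * i * Q i
      - (n : ℝ) ^ 2 * ∑ i : Fin n, cornerCount Q i (Q i) ^ 2 ≤
        ∑ i : Fin n, ((i : ℝ) * Q i) ^ 2 := by
    rw [mul_sum, mul_sum, ← sum_sub_distrib]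
    exact sum_le_sum fun i _ => by
      linarith [sq_nonneg ((n : ℝ) * cornerCount Q i (Q i) - i * Q i)]
  have hmixed := mul_le_mul_of_nonneg_left ((div_le_div_of_nonneg_right
    (add_le_add_right hsquare ((n : ℝ) ^ 2 * (n - 1) ^ 2 * (n - 2) / 3)) (by norm_num)).trans
      (le_sum_cornerCount_mul Q)) (by positivity : (0 : ℝ) ≤ 2 / n)
  have hpoly : -((n : ℝ) * (n - 1) ^ 2 * (n - 2)) / 6 +
      ((n : ℝ) * (n - 1) * (2 * n - 1) / 6) ^ 2 / n ^ 2 ≤ -(n : ℝ) ^ 4 / 18 + (n : ℝ) ^ 3 / 3 := by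
    have : ((n : ℝ) * (n - 1) * (2 * n - 1) / 6) ^ 2 / n ^ 2 =
        ((n - 1 : ℝ) * (2 * n - 1)) ^ 2 / 36 := by
      field_simp
      ring
    rw [this]
    nlinarith
  have hdiv : ∀ a b : ℝ, 2 / n * (((n : ℝ) ^ 2 * (n - 1) ^ 2 * (n - 2) / 3 +
      (2 * n * b - (n : ℝ) ^ 2 * a)) / 4) =
        (n : ℝ) * (n - 1) ^ 2 * (n - 2) / 6 + b - n * a / 2 := by
    intro a b
    field_simp
    ring
  rw [hdiv] at hmixed
  rw [sum_discrepancy_sq]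
  linarith

end CornerCount

/-! ### Convergence of the mean square discrepancy -/

section MeanSquare

/-- The indicator of the `p`-th and `q`-th entries of a quadruple both being smaller than the
`r`-th. -/
noncomputable def belowBoth (p q r : Fin 4) (u : Fin 4 → ℕ) : ℝ :=
  𝟙[u p < u r] * 𝟙[u q < u r]

theorem orderInvariant_belowBoth (p q r : Fin 4) : OrderInvariant (belowBoth p q r) :=
  fun u v h => by rw [belowBoth, belowBoth, iverson_congr (h p r), iverson_congr (h q r)]

set_option maxRecDepth 4000 in
theorem sum_perm_belowBoth {p q r : Fin 4} (h : [p, q, r].Nodup) :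
    ∑ σ : Equiv.Perm (Fin 4), belowBoth p q r (fun j => σ j) = 8 := by
  have hcard : ∀ p q r : Fin 4, [p, q, r].Nodup →
      #{σ : Equiv.Perm (Fin 4) | σ p < σ r ∧ σ q < σ r} = 8 := by
    decide
  simp only [belowBoth, iverson_mul_iverson, Fin.val_fin_lt]
  rw [sum_iverson, hcard p q r h, Nat.cast_ofNat]

theorem tendsto_sum_belowBoth {P : ℕ → (n : ℕ) × Equiv.Perm (Fin n)}
    (hP : ∀ π : Equiv.Perm (Fin 4),
      Tendsto (fun i => PatternDensity π (P i).2) atTop (𝓝 (1 / Nat.factorial 4)))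
    {p q r s t u : Fin 4} (hpqr : [p, q, r].Nodup) (hstu : [s, t, u].Nodup) :
    Tendsto (fun i => (∑ a : Fin 4 → Fin (P i).1,
      belowBoth p q r (fun j => a j) * belowBoth s t u (fun j => (P i).2 (a j))) / (P i).1 ^ 4)
      atTop (𝓝 (1 / 9)) := by
  have hvalue : (8 * 8 / (Nat.factorial 4 : ℝ) ^ 2) = 1 / 9 := by norm_num [Nat.factorial]
  have hlimit := tendsto_sum_tuple_div_pow (orderInvariant_belowBoth p q r)
    (orderInvariant_belowBoth s t u) hP (tendsto_order_atTop le_rfl hP)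
  rwa [sum_perm_belowBoth hpqr, sum_perm_belowBoth hstu, hvalue] at hlimit

theorem sum_tuple_succ {α M : Type*} [Fintype α] [AddCommMonoid M] {k : ℕ}
    (F : (Fin (k + 1) → α) → M) : ∑ a, F a = ∑ x, ∑ a, F (Matrix.vecCons x a) := by
  rw [← (Fin.consEquiv fun _ => α).sum_comp, Fintype.sum_prod_type]
  rfl

variable {n : ℕ} (Q : Equiv.Perm (Fin n))

theorem sum_quadruple_cornerCount_sq :
    ∑ a : Fin 4 → Fin n, belowBoth 2 3 0 (fun j => a j) * belowBoth 2 3 1 (fun j => Q (a j)) =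
      ∑ x : Fin n, ∑ y : Fin n, cornerCount Q x y ^ 2 := by
  simp only [sum_tuple_succ, Fintype.sum_unique]
  refine sum_congr rfl fun x _ => ?_
  rw [← Equiv.sum_comp Q fun y : Fin n => cornerCount Q x y ^ 2]
  refine sum_congr rfl fun y _ => ?_
  rw [cornerCount, sq, sum_mul_sum]
  exact sum_congr rfl fun i _ => sum_congr rfl fun j _ => mul_mul_mul_comm ..

theorem sum_quadruple_cornerCount_mul :
    ∑ a : Fin 4 → Fin n, belowBoth 1 2 0 (fun j => a j) * belowBoth 1 3 0 (fun j => Q (a j)) =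
      ∑ i : Fin n, cornerCount Q i (Q i) * i * Q i := by
  simp only [sum_tuple_succ, Fintype.sum_unique]
  refine sum_congr rfl fun i _ => ?_
  have hQ : ∑ l : Fin n, 𝟙[(Q l : ℕ) < Q i] = Q i :=
    (Equiv.sum_comp Q fun l => 𝟙[(l : ℕ) < Q i]).trans (sum_iverson_lt (Q i).is_lt.le)
  rw [← hQ, ← sum_iverson_lt i.is_lt.le, cornerCount, sum_mul_sum, sum_mul]
  refine sum_congr rfl fun j _ => ?_
  rw [sum_mul_sum]
  refine sum_congr rfl fun k _ => sum_congr rfl fun l _ => ?_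
  change 𝟙[(j : ℕ) < i] * 𝟙[(k : ℕ) < i] * (𝟙[(Q j : ℕ) < Q i] * 𝟙[(Q l : ℕ) < Q i]) = _
  ring

theorem sum_quadruple_cornerCount_diag_sq :
    ∑ a : Fin 4 → Fin n, belowBoth 1 2 0 (fun j => a j) * belowBoth 1 2 0 (fun j => Q (a j)) =
      n * ∑ i : Fin n, cornerCount Q i (Q i) ^ 2 := by
  simp only [sum_tuple_succ, Fintype.sum_unique]
  rw [mul_sum]
  refine sum_congr rfl fun i _ => ?_
  rw [cornerCount, sq, sum_mul_sum, mul_sum]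
  refine sum_congr rfl fun j _ => ?_
  rw [mul_sum]
  refine sum_congr rfl fun k _ => ?_
  calc _ = ∑ _l : Fin n,
        𝟙[(j : ℕ) < i] * 𝟙[(Q j : ℕ) < Q i] * (𝟙[(k : ℕ) < i] * 𝟙[(Q k : ℕ) < Q i]) :=
        sum_congr rfl fun _ _ => mul_mul_mul_comm ..
    _ = _ := by rw [sum_const, card_univ, Fintype.card_fin, nsmul_eq_mul]

/-- The three quadruple sums have the limits `1 / 9`, and `1 / 9 - 1 / 9 + 1 / 18 - 1 / 18 = 0`. -/
theorem tendsto_sum_discrepancy_sq {P : ℕ → (n : ℕ) × Equiv.Perm (Fin n)}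
    (hP : ∀ π : Equiv.Perm (Fin 4),
      Tendsto (fun i => PatternDensity π (P i).2) atTop (𝓝 (1 / Nat.factorial 4))) :
    Tendsto (fun i => (∑ x : Fin (P i).1, ∑ y : Fin (P i).1, discrepancy (P i).2 x y ^ 2) /
      (P i).1 ^ 4) atTop (𝓝 0) := by
  have horder := tendsto_order_atTop le_rfl hP
  have hsq := tendsto_sum_belowBoth hP (show [2, 3, 0].Nodup by decide)
    (show [2, 3, 1].Nodup by decide)
  have hmul := tendsto_sum_belowBoth hP (show [1, 2, 0].Nodup by decide)
    (show [1, 3, 0].Nodup by decide)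
  have hdiag := tendsto_sum_belowBoth hP (show [1, 2, 0].Nodup by decide)
    (show [1, 2, 0].Nodup by decide)
  simp only [sum_quadruple_cornerCount_sq, sum_quadruple_cornerCount_mul,
    sum_quadruple_cornerCount_diag_sq] at hsq hmul hdiag
  have hinv : Tendsto (fun i => ((P i).1 : ℝ)⁻¹) atTop (𝓝 0) :=
    tendsto_inv_atTop_nhds_zero_nat.comp horder
  have hbound := (((hsq.sub hmul).add (hdiag.div_const 2)).sub_const (1 / 18)).add
    (hinv.div_const 3)
  norm_num only at hbound
  refine squeeze_zero' (Eventually.of_forall fun i => by positivity) ?_ hbound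
  filter_upwards [horder.eventually_gt_atTop 0] with i hi
  have : (0 : ℝ) < (P i).1 := Nat.cast_pos.2 hi
  refine (div_le_div_of_nonneg_right (sum_discrepancy_sq_le hi _) (by positivity)).trans_eq ?_
  field_simp

end MeanSquare

/-! ### From the mean square to the supremum -/

section Supremum

variable {n : ℕ} (Q : Equiv.Perm (Fin n))

theorem cornerCount_symm (x y : ℕ) : cornerCount Q.symm y x = cornerCount Q x y := by
  rw [cornerCount, cornerCount, ← Equiv.sum_comp Q]
  exact sum_congr rfl fun j _ => by rw [Q.symm_apply_apply, mul_comm]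

theorem discrepancy_symm (x y : ℕ) : discrepancy Q.symm y x = discrepancy Q x y := by
  rw [discrepancy, discrepancy, cornerCount_symm, mul_comm (y : ℝ)]

theorem discrepancy_zero_left (y : ℕ) : discrepancy Q 0 y = 0 := by
  simp [discrepancy, cornerCount, iverson]

theorem discrepancy_zero_right (x : ℕ) : discrepancy Q x 0 = 0 := by
  rw [← discrepancy_symm, discrepancy_zero_left]

theorem cornerCount_self_left {y : ℕ} (hy : y ≤ n) : cornerCount Q n y = y := by
  rw [← sum_iverson_lt hy, ← Equiv.sum_comp Q, cornerCount]
  exact sum_congr rfl fun j _ => by rw [iverson_of_true j.is_lt, one_mul]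

theorem discrepancy_self_left {y : ℕ} (hy : y ≤ n) : discrepancy Q n y = 0 := by
  rcases n.eq_zero_or_pos with rfl | hn
  · exact discrepancy_zero_left Q y
  · rw [discrepancy, cornerCount_self_left Q hy,
      mul_div_cancel_left₀ _ (Nat.cast_ne_zero.2 hn.ne'), sub_self]

theorem discrepancy_self_right {x : ℕ} (hx : x ≤ n) : discrepancy Q x n = 0 := by
  rw [← discrepancy_symm, discrepancy_self_left _ hx]

theorem cornerCount_sub_mem_Icc {x x' : ℕ} (hxx' : x ≤ x') (hx' : x' ≤ n) (y : ℕ) :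
    cornerCount Q x' y - cornerCount Q x y ∈ Set.Icc 0 ((x' : ℝ) - x) := by
  have hmono : ∀ j : Fin n, 0 ≤ 𝟙[(j : ℕ) < x'] - 𝟙[(j : ℕ) < x] := fun j =>
    sub_nonneg.2 (iverson_mono fun hj => hj.trans_le hxx')
  rw [cornerCount, cornerCount, ← sum_sub_distrib, ← sum_iverson_lt hx',
    ← sum_iverson_lt (hxx'.trans hx'), ← sum_sub_distrib]
  simp only [← sub_mul]
  exact ⟨sum_nonneg fun j _ => mul_nonneg (hmono j) iverson_nonneg,
    sum_le_sum fun j _ => mul_le_of_le_one_right (hmono j) iverson_le_one⟩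

theorem abs_discrepancy_sub_left_le {x x' y : ℕ} (hxx' : x ≤ x') (hx' : x' ≤ n) (hy : y ≤ n) :
    |discrepancy Q x' y - discrepancy Q x y| ≤ x' - x := by
  have hcount := cornerCount_sub_mem_Icc Q hxx' hx' y
  have hx : (0 : ℝ) ≤ x' - x := sub_nonneg.2 (Nat.cast_le.2 hxx')
  have hyn : (y : ℝ) / n ≤ 1 := div_le_one_of_le₀ (Nat.cast_le.2 hy) n.cast_nonneg
  have huniform : ((x' : ℝ) - x) * (y / n) ∈ Set.Icc 0 ((x' : ℝ) - x) :=
    ⟨mul_nonneg hx (by positivity), mul_le_of_le_one_right hx hyn⟩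
  have heq : discrepancy Q x' y - discrepancy Q x y =
      (cornerCount Q x' y - cornerCount Q x y) - ((x' : ℝ) - x) * (y / n) := by
    rw [discrepancy, discrepancy]
    ring
  rw [heq]
  exact abs_sub_le_of_nonneg_of_le hcount.1 hcount.2 huniform.1 huniform.2

theorem abs_discrepancy_sub_le {x x' y y' : ℕ} (hxx' : x ≤ x') (hx' : x' ≤ n) (hyy' : y ≤ y')
    (hy' : y' ≤ n) :
    |discrepancy Q x' y' - discrepancy Q x y| ≤ (x' - x) + (y' - y) := by
  have hvertical := abs_discrepancy_sub_left_le Q.symm hyy' hy' (hxx'.trans hx')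
  rw [discrepancy_symm, discrepancy_symm] at hvertical
  exact (abs_sub_le _ (discrepancy Q x y') _).trans
    (add_le_add (abs_discrepancy_sub_left_le Q hxx' hx' hy') hvertical)

theorem half_abs_discrepancy_le {x x₀ y y₀ : ℕ} (hx : x ≤ x₀) (hx₀ : x₀ ≤ n)
    (hxclose : (x₀ : ℝ) - x ≤ |discrepancy Q x₀ y₀| / 4) (hy : y ≤ y₀) (hy₀ : y₀ ≤ n)
    (hyclose : (y₀ : ℝ) - y ≤ |discrepancy Q x₀ y₀| / 4) :
    |discrepancy Q x₀ y₀| / 2 ≤ |discrepancy Q x y| := by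
  have hlip := abs_discrepancy_sub_le Q hx hx₀ hy hy₀
  have hdrop := abs_sub_abs_le_abs_sub (discrepancy Q x₀ y₀) (discrepancy Q x y)
  linarith

theorem exists_window {r : ℝ} {z : ℕ} (hrz : r ≤ z) :
    ∃ s ⊆ Iic z, r ≤ #s ∧ ∀ x ∈ s, (z : ℝ) - x ≤ r := by
  refine ⟨Ioc (z - ⌈r⌉₊) z, fun x hx => mem_Iic.2 (mem_Ioc.1 hx).2, ?_, fun x hx => ?_⟩
  · rw [Nat.card_Ioc, Nat.sub_sub_self (Nat.ceil_le.2 hrz)]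
    exact Nat.le_ceil r
  · have hzx : z - x < ⌈r⌉₊ := by
      have := mem_Ioc.1 hx
      omega
    rw [← Nat.cast_sub (mem_Ioc.1 hx).2]
    exact (Nat.lt_ceil.1 hzx).le

/-- A large value of the Lipschitz function `discrepancy Q` stays large on a square of proportional
side, and this square lies in the grid because `discrepancy Q` vanishes on the boundary. -/
theorem discrepancy_pow_four_le {x₀ y₀ : ℕ} (hx₀ : x₀ ≤ n) (hy₀ : y₀ ≤ n) :
    discrepancy Q x₀ y₀ ^ 4 ≤ 64 * ∑ x : Fin n, ∑ y : Fin n, discrepancy Q x y ^ 2 := by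
  rcases hx₀.eq_or_lt with rfl | hx₀n
  · rw [discrepancy_self_left Q hy₀, zero_pow four_ne_zero]
    positivity
  rcases hy₀.eq_or_lt with rfl | hy₀n
  · rw [discrepancy_self_right Q hx₀, zero_pow four_ne_zero]
    positivity
  set c := |discrepancy Q x₀ y₀| with hc
  have hcx : c ≤ x₀ := by
    simpa [discrepancy_zero_left] using abs_discrepancy_sub_le Q x₀.zero_le hx₀ le_rfl hy₀
  have hcy : c ≤ y₀ := by
    simpa [discrepancy_zero_right] using abs_discrepancy_sub_le Q le_rfl hx₀ y₀.zero_le hy₀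
  have hc₀ : 0 ≤ c := abs_nonneg _
  obtain ⟨s, hs, hscard, hsclose⟩ := exists_window (r := c / 4) (z := x₀) (by linarith)
  obtain ⟨t, ht, htcard, htclose⟩ := exists_window (r := c / 4) (z := y₀) (by linarith)
  have hlarge : ∀ p ∈ s ×ˢ t, (c / 2) ^ 2 ≤ discrepancy Q p.1 p.2 ^ 2 := by
    intro p hp
    obtain ⟨hps, hpt⟩ := mem_product.1 hp
    rw [← sq_abs (discrepancy Q p.1 p.2)]
    exact pow_le_pow_left₀ (by positivity) (half_abs_discrepancy_le Q (mem_Iic.1 (hs hps)) hx₀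
      (hsclose _ hps) (mem_Iic.1 (ht hpt)) hy₀ (htclose _ hpt)) 2
  have hsub : s ×ˢ t ⊆ range n ×ˢ range n := product_subset_product
    (fun x hx => mem_range.2 ((mem_Iic.1 (hs hx)).trans_lt hx₀n))
    (fun y hy => mem_range.2 ((mem_Iic.1 (ht hy)).trans_lt hy₀n))
  calc discrepancy Q x₀ y₀ ^ 4 = 64 * ((c / 4) * (c / 4) * (c / 2) ^ 2) := by
        rw [← (show Even 4 by decide).pow_abs]
        ring
    _ ≤ 64 * (#s * #t * (c / 2) ^ 2) := by gcongr
    _ ≤ 64 * ∑ p ∈ s ×ˢ t, discrepancy Q p.1 p.2 ^ 2 := by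
        have := card_nsmul_le_sum _ _ _ hlarge
        rw [card_product, nsmul_eq_mul, Nat.cast_mul] at this
        gcongr
    _ ≤ 64 * ∑ p ∈ range n ×ˢ range n, discrepancy Q p.1 p.2 ^ 2 := by
        gcongr
    _ = _ := by simp only [sum_product, sum_range]

theorem exists_tendsto_zero_abs_discrepancy_le {P : ℕ → (n : ℕ) × Equiv.Perm (Fin n)}
    (hP : ∀ π : Equiv.Perm (Fin 4),
      Tendsto (fun i => PatternDensity π (P i).2) atTop (𝓝 (1 / Nat.factorial 4))) :
    ∃ δ : ℕ → ℝ, Tendsto δ atTop (𝓝 0) ∧ ∀ i, ∀ x ≤ (P i).1, ∀ y ≤ (P i).1,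
      |discrepancy (P i).2 x y| ≤ δ i * (P i).1 := by
  have hroot : Tendsto (fun t => √√(64 * t)) (𝓝 0) (𝓝 0) :=
    Continuous.tendsto' (by fun_prop) _ _ (by simp)
  refine ⟨_, hroot.comp (tendsto_sum_discrepancy_sq hP), fun i x hx y hy => ?_⟩
  set S := ∑ x : Fin (P i).1, ∑ y : Fin (P i).1, discrepancy (P i).2 x y ^ 2 with hS
  have : 0 ≤ S := by positivity
  have hfour : ∀ t : ℝ, 0 ≤ t → √√t ^ 4 = t := fun t ht => by
    rw [show 4 = 2 * 2 from rfl, pow_mul, Real.sq_sqrt (Real.sqrt_nonneg t), Real.sq_sqrt ht]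
  have hempty : ((P i).1 : ℝ) ^ 4 = 0 → S = 0 := fun h => by
    have : IsEmpty (Fin (P i).1) :=
      Fintype.card_eq_zero_iff.1 <| (Fintype.card_fin _).trans <|
        Nat.cast_eq_zero.1 (eq_zero_of_pow_eq_zero h)
    rw [hS, Fintype.sum_empty]
  change |discrepancy (P i).2 x y| ≤ √√(64 * (S / (P i).1 ^ 4)) * (P i).1
  refine le_of_pow_le_pow_left₀ four_ne_zero (by positivity) ?_
  rw [mul_pow, hfour _ (by positivity), mul_assoc,
    div_mul_cancel_of_imp hempty, (show Even 4 by decide).pow_abs]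
  exact discrepancy_pow_four_le (P i).2 hx hy

end Supremum

/-! ### Pattern densities of permutations of small discrepancy -/

section Counting

variable {k n : ℕ}

theorem exists_iverson_mem_eq_sub {A : Set (Fin n)} (hA : A.OrdConnected) :
    ∃ l ≤ n, ∃ u ≤ n, ∀ x : Fin n, 𝟙[x ∈ A] = 𝟙[(x : ℕ) < u] - 𝟙[(x : ℕ) < l] := by
  rcases A.eq_empty_or_nonempty with rfl | hne
  · exact ⟨0, n.zero_le, 0, n.zero_le, fun x => by simp [iverson]⟩
  obtain ⟨p, hp⟩ := A.toFinite.exists_minimal hne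
  obtain ⟨q, hq⟩ := A.toFinite.exists_maximal hne
  rw [minimal_iff_isLeast] at hp
  rw [maximal_iff_isGreatest] at hq
  refine ⟨p, p.is_lt.le, q + 1, q.is_lt, fun x => ?_⟩
  have hmem : x ∈ A ↔ (p : ℕ) ≤ x ∧ (x : ℕ) < q + 1 :=
    ⟨fun hx => ⟨hp.2 hx, Nat.lt_succ_of_le (hq.2 hx)⟩,
      fun hx => hA.out hp.1 hq.1 ⟨hx.1, Nat.le_of_lt_succ hx.2⟩⟩
  have hpq : (p : ℕ) ≤ q := hp.2 hq.1
  rw [iverson_congr hmem]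
  by_cases hlower : (x : ℕ) < p
  · rw [iverson_of_false fun h => hlower.not_ge h.1, iverson_of_true hlower,
      iverson_of_true (by omega), sub_self]
  · rw [iverson_of_false hlower, sub_zero]
    exact iverson_congr (and_iff_right (not_lt.1 hlower))

theorem abs_sum_iverson_mem_sub_le {Q : Equiv.Perm (Fin n)} {δ : ℝ} (hn : 0 < n)
    (hδ : ∀ x ≤ n, ∀ y ≤ n, |discrepancy Q x y| ≤ δ * n) {A B : Set (Fin n)}
    (hA : A.OrdConnected) (hB : B.OrdConnected) :
    |n * ∑ x, 𝟙[x ∈ A] * 𝟙[Q x ∈ B] - (∑ x, 𝟙[x ∈ A]) * ∑ y, 𝟙[y ∈ B]| ≤ 4 * δ * n ^ 2 := by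
  obtain ⟨l, hl, u, hu, hA⟩ := exists_iverson_mem_eq_sub hA
  obtain ⟨b, hb, t, ht, hB⟩ := exists_iverson_mem_eq_sub hB
  have hgraph : ∑ x, 𝟙[x ∈ A] * 𝟙[Q x ∈ B] =
      cornerCount Q u t - cornerCount Q l t - cornerCount Q u b + cornerCount Q l b := by
    simp only [cornerCount, ← sum_sub_distrib, ← sum_add_distrib, hA, hB]
    exact sum_congr rfl fun x _ => by ring
  have hcorners : n * ∑ x, 𝟙[x ∈ A] * 𝟙[Q x ∈ B] - (∑ x, 𝟙[x ∈ A]) * ∑ y, 𝟙[y ∈ B] =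
      n * (discrepancy Q u t - discrepancy Q l t - discrepancy Q u b + discrepancy Q l b) := by
    rw [hgraph]
    simp only [hA, hB, sum_sub_distrib, sum_iverson_lt hl, sum_iverson_lt hu, sum_iverson_lt hb,
      sum_iverson_lt ht, discrepancy]
    field_simp
    ring
  have hbound : |discrepancy Q u t - discrepancy Q l t - discrepancy Q u b + discrepancy Q l b| ≤
      4 * (δ * n) := by
    have hut := abs_le.1 (hδ u hu t ht)
    have hlt := abs_le.1 (hδ l hl t ht)
    have hub := abs_le.1 (hδ u hu b hb)
    have hlb := abs_le.1 (hδ l hl b hb)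
    exact abs_le.2 ⟨by linarith, by linarith⟩
  calc _ = n * |discrepancy Q u t - discrepancy Q l t - discrepancy Q u b + discrepancy Q l b| := by
        rw [hcorners, abs_mul, Nat.abs_cast]
    _ ≤ n * (4 * (δ * n)) := by gcongr
    _ = 4 * δ * n ^ 2 := by ring

theorem card_mul_sum_pi {ι α : Type*} [Fintype ι] [DecidableEq ι] [Fintype α] (m : ι)
    (Φ : (ι → α) → ℝ) :
    Fintype.card α * ∑ a, Φ a = ∑ a, ∑ x, Φ (Function.update a m x) := by
  have hswap : Function.Involutive fun p : (ι → α) × α => (Function.update p.1 m p.2, p.1 m) :=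
    fun p => by simp
  have hsum := Equiv.sum_comp hswap.toPerm fun p => Φ p.1
  simp only [Fintype.sum_prod_type, Function.Involutive.coe_toPerm, sum_const, card_univ,
    nsmul_eq_mul, ← mul_sum] at hsum
  exact hsum.symm

theorem ordConnected_setOf_strictMono_update (a : Fin k → Fin n) (m : Fin k) :
    {x | StrictMono (Function.update a m x)}.OrdConnected := by
  simpa only [strictMono_iff_orderIsomorphic_one] using
    ordConnected_setOf_orderIsomorphic_update a _ m

theorem sum_iverson_strictMono_mul (Φ : (Fin k → Fin n) → ℝ) :
    ∑ a, 𝟙[StrictMono a] * Φ a = ∑ e : Fin k ↪o Fin n, Φ e := by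
  symm
  refine Fintype.sum_of_injective _ DFunLike.coe_injective _ _ (fun a ha => ?_) fun e => ?_
  · rw [iverson_of_false fun h => ha ⟨OrderEmbedding.ofStrictMono a h, rfl⟩, zero_mul]
  · rw [iverson_of_true e.strictMono, one_mul]

theorem sum_iverson_strictMono : ∑ a : Fin k → Fin n, 𝟙[StrictMono a] = n.choose k := by
  simpa [card_orderEmbedding_fin] using
    sum_iverson_strictMono_mul fun _ : Fin k → Fin n => (1 : ℝ)

theorem sum_iverson_orderIsomorphic_perm (π : Equiv.Perm (Fin k)) :
    ∑ b : Fin k → Fin n, 𝟙[OrderIsomorphic b π] = n.choose k := by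
  rw [← sum_iverson_strictMono,
    ← Equiv.sum_comp (π.symm.arrowCongr (Equiv.refl (Fin n))) fun b => 𝟙[OrderIsomorphic b π]]
  refine sum_congr rfl fun b _ => iverson_congr ?_
  rw [strictMono_iff_orderIsomorphic_one]
  exact ⟨fun h i j => by simpa using h (π.symm i) (π.symm j), fun h => h.comp π⟩

/-- The number of pairs of an increasing `k`-tuple of positions `a` and a `k`-tuple `b` such that
the tuple with the entries of `b` inside `s` and the values of `Q` along `a` outside `s` has the
pattern `π`. As `s` grows from `∅` to `univ`, the values of `Q` are replaced one by one by free
values. -/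
noncomputable def hybridCount (Q : Equiv.Perm (Fin n)) (π : Equiv.Perm (Fin k))
    (s : Finset (Fin k)) : ℝ :=
  ∑ a : Fin k → Fin n, ∑ b : Fin k → Fin n,
    𝟙[StrictMono a] * 𝟙[OrderIsomorphic (s.piecewise b (Q ∘ a)) π]

variable (Q : Equiv.Perm (Fin n)) (π : Equiv.Perm (Fin k))

theorem hybridCount_empty :
    hybridCount Q π ∅ = n ^ k * (n.choose k * PatternDensity π Q) := by
  rw [← sum_iverson_orderIsomorphic,
    ← sum_iverson_strictMono_mul fun a => 𝟙[OrderIsomorphic (Q ∘ a) π]]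
  simp [hybridCount, mul_sum]

theorem hybridCount_univ : hybridCount Q π univ = n.choose k ^ 2 := by
  simp only [hybridCount, piecewise_univ, ← sum_mul_sum, sum_iverson_strictMono,
    sum_iverson_orderIsomorphic_perm, sq]

theorem piecewise_update_comp_update {s : Finset (Fin k)} {m : Fin k} (hm : m ∉ s)
    (a b : Fin k → Fin n) (x y : Fin n) :
    s.piecewise (Function.update b m y) (Q ∘ Function.update a m x) =
      Function.update (s.piecewise b (Q ∘ a)) m (Q x) := by
  rw [Function.comp_update, update_piecewise_of_notMem _ _ _ hm]
  refine piecewise_congr s (fun j hj => ?_) fun _ _ => rfl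
  rw [Function.update_of_ne (ne_of_mem_of_not_mem hj hm)]

theorem mul_hybridCount {s : Finset (Fin k)} {m : Fin k} (hm : m ∉ s) :
    n * hybridCount Q π s = ∑ a : Fin k → Fin n, ∑ b : Fin k → Fin n, ∑ x,
      𝟙[StrictMono (Function.update a m x)] *
        𝟙[OrderIsomorphic (Function.update (s.piecewise b (Q ∘ a)) m (Q x)) π] := by
  have := card_mul_sum_pi (α := Fin n) m fun a : Fin k → Fin n => ∑ b : Fin k → Fin n,
    𝟙[StrictMono a] * 𝟙[OrderIsomorphic (s.piecewise b (Q ∘ a)) π]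
  rw [Fintype.card_fin] at this
  rw [hybridCount, this]
  refine sum_congr rfl fun a _ => sum_comm.trans (sum_congr rfl fun b _ => ?_)
  refine sum_congr rfl fun x _ => ?_
  rw [← piecewise_update_comp_update Q hm a b x (b m), Function.update_eq_self]

theorem sq_mul_hybridCount_insert {s : Finset (Fin k)} {m : Fin k} (hm : m ∉ s) :
    n ^ 2 * hybridCount Q π (insert m s) = ∑ a : Fin k → Fin n, ∑ b : Fin k → Fin n,
      (∑ x, 𝟙[StrictMono (Function.update a m x)]) *
        ∑ y, 𝟙[OrderIsomorphic (Function.update (s.piecewise b (Q ∘ a)) m y) π] := by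
  have average := fun Φ => card_mul_sum_pi (ι := Fin k) (α := Fin n) m Φ
  simp only [Fintype.card_fin] at average
  rw [hybridCount, sq, mul_assoc, average, mul_sum]
  refine sum_congr rfl fun a _ => ?_
  rw [mul_sum, sum_congr rfl fun x _ => average _, sum_comm]
  refine sum_congr rfl fun b _ => ?_
  rw [sum_mul_sum]
  refine sum_congr rfl fun x _ => sum_congr rfl fun y _ => ?_
  rw [piecewise_insert, piecewise_update_comp_update Q hm, Function.update_idem,
    Function.update_self]

theorem abs_hybridCount_sub_insert_le {δ : ℝ} (hn : 0 < n)
    (hδ : ∀ x ≤ n, ∀ y ≤ n, |discrepancy Q x y| ≤ δ * n) {s : Finset (Fin k)} {m : Fin k}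
    (hm : m ∉ s) :
    |hybridCount Q π s - hybridCount Q π (insert m s)| ≤ 4 * δ * n ^ (2 * k) := by
  have hsq : (0 : ℝ) < n ^ 2 := by positivity
  refine le_of_mul_le_mul_left ?_ hsq
  calc n ^ 2 * |hybridCount Q π s - hybridCount Q π (insert m s)|
      = |n * (n * hybridCount Q π s) - n ^ 2 * hybridCount Q π (insert m s)| := by
        rw [← abs_of_pos hsq, ← abs_mul, abs_of_pos hsq]
        ring_nf
    _ ≤ ∑ _a : Fin k → Fin n, ∑ _b : Fin k → Fin n, 4 * δ * n ^ 2 := by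
        rw [mul_hybridCount Q π hm, sq_mul_hybridCount_insert Q π hm]
        simp only [mul_sum (a := (n : ℝ)) (s := univ (α := Fin k → Fin n)), ← sum_sub_distrib]
        refine (abs_sum_le_sum_abs _ _).trans <| sum_le_sum fun a _ =>
          (abs_sum_le_sum_abs _ _).trans <| sum_le_sum fun b _ => ?_
        exact abs_sum_iverson_mem_sub_le hn hδ (ordConnected_setOf_strictMono_update a m)
          (ordConnected_setOf_orderIsomorphic_update (s.piecewise b (Q ∘ a)) π m)
    _ = n ^ 2 * (4 * δ * n ^ (2 * k)) := by
        simp only [sum_const, card_univ, Fintype.card_pi, Fintype.card_fin, prod_const,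
          nsmul_eq_mul, Nat.cast_pow]
        ring

theorem abs_hybridCount_empty_sub_le {δ : ℝ} (hn : 0 < n)
    (hδ : ∀ x ≤ n, ∀ y ≤ n, |discrepancy Q x y| ≤ δ * n) (s : Finset (Fin k)) :
    |hybridCount Q π ∅ - hybridCount Q π s| ≤ #s * (4 * δ * n ^ (2 * k)) := by
  induction s using Finset.induction_on with
  | empty => simp
  | insert m s hm ih =>
    rw [card_insert_of_notMem hm, Nat.cast_add_one, add_one_mul]
    exact (abs_sub_le _ _ _).trans (add_le_add ih (abs_hybridCount_sub_insert_le Q π hn hδ hm))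

theorem abs_choose_div_pow_mul_patternDensity_sub_le {δ : ℝ} (hn : 0 < n)
    (hδ : ∀ x ≤ n, ∀ y ≤ n, |discrepancy Q x y| ≤ δ * n) :
    |(n.choose k : ℝ) / n ^ k * PatternDensity π Q - ((n.choose k : ℝ) / n ^ k) ^ 2| ≤
      4 * k * δ := by
  have hpow : (0 : ℝ) < n ^ (2 * k) := by positivity
  have hscale : hybridCount Q π ∅ - hybridCount Q π univ = n ^ (2 * k) *
      ((n.choose k : ℝ) / n ^ k * PatternDensity π Q - ((n.choose k : ℝ) / n ^ k) ^ 2) := by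
    rw [hybridCount_empty, hybridCount_univ]
    field_simp
    ring
  have hle := abs_hybridCount_empty_sub_le Q π hn hδ univ
  rw [hscale, abs_mul, abs_of_pos hpow, card_univ, Fintype.card_fin] at hle
  exact le_of_mul_le_mul_left (hle.trans_eq (by ring)) hpow

end Counting

theorem tendsto_patternDensity_of_discrepancy {P : ℕ → (n : ℕ) × Equiv.Perm (Fin n)}
    (horder : Tendsto (fun i => (P i).1) atTop atTop) {δ : ℕ → ℝ} (hδ : Tendsto δ atTop (𝓝 0))
    (hP : ∀ i, ∀ x ≤ (P i).1, ∀ y ≤ (P i).1, |discrepancy (P i).2 x y| ≤ δ i * (P i).1)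
    {k : ℕ} (π : Equiv.Perm (Fin k)) :
    Tendsto (fun i => PatternDensity π (P i).2) atTop (𝓝 (1 / k.factorial)) := by
  have hratio : Tendsto (fun i => ((P i).1.choose k : ℝ) / (P i).1 ^ k) atTop
      (𝓝 (1 / k.factorial)) := (tendsto_choose_div_pow k).comp horder
  have hdiff : Tendsto (fun i => ((P i).1.choose k : ℝ) / (P i).1 ^ k * PatternDensity π (P i).2 -
      (((P i).1.choose k : ℝ) / (P i).1 ^ k) ^ 2) atTop (𝓝 0) := by
    refine squeeze_zero_norm' ?_ (by simpa using hδ.const_mul (4 * (k : ℝ)))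
    filter_upwards [horder.eventually_gt_atTop 0] with i hi
    exact abs_choose_div_pow_mul_patternDensity_sub_le (P i).2 π hi (hP i)
  have hlimit : (1 : ℝ) / k.factorial ≠ 0 := by positivity
  have hquotient := (hdiff.add (hratio.pow 2)).div hratio hlimit
  rw [zero_add, sq, mul_div_cancel_right₀ _ hlimit] at hquotient
  refine hquotient.congr' ?_
  filter_upwards [hratio.eventually_ne hlimit] with i hi
  simp only [Pi.div_apply]
  rw [sub_add_cancel, mul_div_cancel_left₀ _ hi]

end PermPattern

theorem statement_0 (P : ℕ → (n : ℕ) × Equiv.Perm (Fin n)) :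
    Quasirandom P ↔
      ∀ π : Equiv.Perm (Fin 4),
        Tendsto (fun i => PatternDensity π (P i).2) atTop (nhds (1 / 24 : ℝ)) := by
  have hfactorial : (1 / 24 : ℝ) = 1 / Nat.factorial 4 := by norm_num [Nat.factorial]
  rw [hfactorial]
  refine ⟨fun hP π => hP 4 π, fun hP k π => ?_⟩
  obtain ⟨δ, hδ, hdiscrepancy⟩ := PermPattern.exists_tendsto_zero_abs_discrepancy_le hP
  exact PermPattern.tendsto_patternDensity_of_discrepancy
    (PermPattern.tendsto_order_atTop le_rfl hP) hδ hdiscrepancy π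
end

section
/- Let μ be a permuton. If μ([min{x_1,x_2},max{x_1,x_2}]×[min{y_1,y_2},max{y_1,y_2}]) = |x_2−x_1|·|y_2−y_1| for all pairs of points (x_1,y_1),(x_2,y_2) ∈ supp μ, then μ is the uniform permuton, i.e. two-dimensional Lebesgue measure on [0,1]². -/
open MeasureTheory Filter

/-!
Write `D(x, y) = μ((-∞, x] × (-∞, y]) - x y` and call the alternating sum of `D` over the corners
of a rectangle its defect. The hypothesis says that a rectangle spanned by two support points has
defect `0`, whereas a rectangle whose interior misses the support has defect minus its area. Hence
an empty rectangle spanned by two support points is degenerate, and, comparing with a support point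
on the line `x = 0`, all support points in one column share the same value of `D`; likewise for
rows.

Emptiness arguments show that above the topmost support point of a column, the open quadrant to its
left or the one to its right misses the support, which determines `D` there. If `D` were negative
at a support point in column `x`, it would be negative on the support in some later column `x'`.
Then nothing lies to the upper right of the top `(x, t)` of the first column or to the lower left
of the bottom `(x', b)` of the second, so the defect of the rectangle spanned by these two points
is a nonzero multiple of `b + (1 - t)`. So `t = 1`, where `D` vanishes: a contradiction.
By reflection `D = 0` on the whole support, which forces `(x, 1)` and `(1, y)` into the support;
the rectangle they span gives `D(x, y) = 0`.
-/

section

open Set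

theorem measSupport_eq_support (μ : Measure (ℝ × ℝ)) : measSupport μ = μ.support := by
  rw [Measure.support_eq_forall_isOpen]
  exact Set.ext fun _ ↦ forall_congr' fun _ ↦ forall_comm

section GeneralMeasure

variable {X Y : Type*} [TopologicalSpace X] [MeasurableSpace X] [BorelSpace X]
  [TopologicalSpace Y] [MeasurableSpace Y] [BorelSpace Y]

theorem mem_support_map_of_continuous {f : X → Y} (hf : Continuous f) {μ : Measure X} {x : X}
    (hx : x ∈ μ.support) : f x ∈ (μ.map f).support := by
  rw [Measure.support_eq_forall_isOpen] at hx ⊢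
  intro U hxU hU
  rw [Measure.map_apply hf.measurable hU.measurableSet]
  exact hx (f ⁻¹' U) hxU (hU.preimage hf)

theorem mem_support_map_homeomorph (e : X ≃ₜ Y) {μ : Measure X} {y : Y} :
    y ∈ (μ.map e).support ↔ e.symm y ∈ μ.support := by
  refine ⟨fun hy ↦ ?_, fun hy ↦ ?_⟩
  · simpa only [Measure.map_map e.symm.continuous.measurable e.continuous.measurable,
      e.symm_comp_self, Measure.map_id] using mem_support_map_of_continuous e.symm.continuous hy
  · simpa only [e.apply_symm_apply] using mem_support_map_of_continuous e.continuous hy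

theorem support_map_subset_image [T2Space Y] [HereditarilyLindelofSpace X] {f : X → Y}
    (hf : Continuous f) {μ : Measure X} (hμ : IsCompact μ.support) :
    (μ.map f).support ⊆ f '' μ.support := by
  have hclosed : IsClosed (f '' μ.support) := (hμ.image hf).isClosed
  refine Measure.support_subset_of_isClosed hclosed ?_
  refine (mem_ae_map_iff hf.aemeasurable hclosed.measurableSet).2 ?_
  exact mem_of_superset Measure.support_mem_ae (subset_preimage_image f _)

end GeneralMeasure

theorem exists_disjoint_Ioo_of_notMem {α : Type*} [LinearOrder α] [TopologicalSpace α]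
    [OrderClosedTopology α] {K : Set α} (hK : IsCompact K) {a b x : α} (ha : a ∈ K) (hb : b ∈ K)
    (hax : a < x) (hxb : x < b) (hx : x ∉ K) :
    ∃ u ∈ K, ∃ v ∈ K, a ≤ u ∧ u < x ∧ x < v ∧ Disjoint (Ioo u v) K := by
  obtain ⟨u, ⟨huK, hux⟩, hu⟩ := (hK.inter_right isClosed_Iic).exists_isGreatest ⟨a, ha, hax.le⟩
  obtain ⟨v, ⟨hvK, hxv⟩, hv⟩ := (hK.inter_right isClosed_Ici).exists_isLeast ⟨b, hb, hxb.le⟩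
  refine ⟨u, huK, v, hvK, hu ⟨ha, hax.le⟩, lt_of_le_of_ne hux fun h ↦ hx (h ▸ huK),
    lt_of_le_of_ne hxv fun h ↦ hx (h ▸ hvK), disjoint_left.2 fun z hz hzK ↦ ?_⟩
  rcases le_total z x with hzx | hxz
  · exact (hu ⟨hzK, hzx⟩).not_gt hz.1
  · exact (hv ⟨hzK, hxz⟩).not_gt hz.2

theorem Icc_subset_support_restrict_Icc {a b : ℝ} (hab : a ≠ b) :
    Icc a b ⊆ (volume.restrict (Icc a b)).support := by
  have hIoo : Ioo a b ⊆ (volume.restrict (Icc a b)).support := by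
    simpa only [interior_Icc, Measure.support_eq_univ, inter_univ] using
      Measure.interior_inter_support (μ := volume) (s := Icc a b)
  simpa only [closure_Ioo hab] using closure_minimal hIoo Measure.isClosed_support

theorem prod_ae_eq_of_fst_of_snd {α β : Type*} [MeasurableSpace α] [MeasurableSpace β]
    {μ : Measure (α × β)} {s s' : Set α} {t t' : Set β} (hs : s =ᵐ[μ.fst] s')
    (ht : t =ᵐ[μ.snd] t') : (s ×ˢ t : Set (α × β)) =ᵐ[μ] (s' ×ˢ t' : Set (α × β)) :=
  ((measurable_fst.quasiMeasurePreserving μ).preimage_ae_eq hs).inter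
    ((measurable_snd.quasiMeasurePreserving μ).preimage_ae_eq ht)

theorem measure_prod_ext_of_Iic {μ ν : Measure (ℝ × ℝ)} [IsFiniteMeasure μ]
    (h : ∀ p, μ (Iic p) = ν (Iic p)) : μ = ν := by
  have hunion : ⋃ n : ℕ, Iic (n : ℝ) = univ :=
    eq_univ_of_forall fun x ↦ mem_iUnion.2 (exists_nat_ge x)
  have hspan : IsCountablySpanning (range (Iic : ℝ → Set ℝ)) :=
    ⟨fun n : ℕ ↦ Iic (n : ℝ), fun n ↦ mem_range_self _, hunion⟩
  have hgen := (borel_eq_generateFrom_Iic ℝ).symm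
  refine Measure.ext_of_generateFrom_of_iUnion _ (fun n : ℕ ↦ Iic ((n : ℝ), (n : ℝ)))
    (generateFrom_eq_prod hgen hgen hspan hspan).symm (isPiSystem_Iic.prod isPiSystem_Iic)
    ?_ (fun n ↦ ⟨_, mem_range_self _, _, mem_range_self _, Iic_prod_Iic _ _⟩)
    (fun n ↦ measure_ne_top μ _) ?_
  · refine eq_univ_of_forall fun p ↦ mem_iUnion.2 ?_
    obtain ⟨n, hn⟩ := exists_nat_ge (max p.1 p.2)
    exact ⟨n, max_le_iff.1 hn⟩
  · rintro _ ⟨_, ⟨x, rfl⟩, _, ⟨y, rfl⟩, rfl⟩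
    simpa only [Iic_prod_Iic] using h (x, y)

/-- The discrepancy of a measure on the plane from Lebesgue measure, at the lower left quadrant
with corner `(x, y)`; the value `x * y` is meant for points of the unit square. -/
noncomputable def discrepancy (μ : Measure (ℝ × ℝ)) (x y : ℝ) : ℝ := μ.real (Iic (x, y)) - x * y

variable {μ ν : Measure (ℝ × ℝ)} {x x₁ x₂ y y₁ y₂ : ℝ}

theorem measureReal_Ioc_prod_Ioc [IsFiniteMeasure μ] (hx : x₁ ≤ x₂) (hy : y₁ ≤ y₂) :
    μ.real (Ioc x₁ x₂ ×ˢ Ioc y₁ y₂) = discrepancy μ x₂ y₂ - discrepancy μ x₁ y₂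
      - discrepancy μ x₂ y₁ + discrepancy μ x₁ y₁ + (x₂ - x₁) * (y₂ - y₁) := by
  have hstrip (y : ℝ) :
      μ.real (Iic (x₂, y)) = μ.real (Iic (x₁, y)) + μ.real (Ioc x₁ x₂ ×ˢ Iic y) := by
    rw [← Iic_prod_Iic, ← Iic_prod_Iic, ← Iic_union_Ioc_eq_Iic hx, union_prod,
      measureReal_union ((Iic_disjoint_Ioc le_rfl).set_prod_left _ _)
        (measurableSet_Ioc.prod measurableSet_Iic)]
  have hrect : μ.real (Ioc x₁ x₂ ×ˢ Iic y₂)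
      = μ.real (Ioc x₁ x₂ ×ˢ Iic y₁) + μ.real (Ioc x₁ x₂ ×ˢ Ioc y₁ y₂) := by
    rw [← Iic_union_Ioc_eq_Iic hy, prod_union,
      measureReal_union ((Iic_disjoint_Ioc le_rfl).set_prod_right _ _)
        (measurableSet_Ioc.prod measurableSet_Ioc)]
  have h₁ := hstrip y₁
  have h₂ := hstrip y₂
  unfold discrepancy
  linear_combination h₁ - h₂ - hrect

theorem measure_eq_restrict_Icc {ν : Measure ℝ} [IsFiniteMeasure ν] {c d : ℝ}
    (hν : ∀ᵐ x ∂ν, x ∈ Icc c d)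
    (h : ∀ a b, c ≤ a → a ≤ b → b ≤ d → ν (Icc a b) = ENNReal.ofReal (b - a)) :
    ν = volume.restrict (Icc c d) := by
  refine Measure.ext_of_Icc _ _ fun a b _ ↦ ?_
  rw [Measure.restrict_apply measurableSet_Icc, ← measure_inter_conull (t := Icc c d) hν,
    Icc_inter_Icc]
  rcases le_or_gt (a ⊔ c) (b ⊓ d) with hab | hab
  · rw [h _ _ le_sup_right hab inf_le_right, Real.volume_Icc]
  · rw [Icc_eq_empty hab.not_ge, measure_empty, measure_empty]

theorem measure_restrict_Icc_zero_one_Iic :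
    volume.restrict (Icc (0 : ℝ) 1) (Iic x) = ENNReal.ofReal (min x 1) := by
  have hinter : Iic x ∩ Icc (0 : ℝ) 1 = Icc 0 (min x 1) := by
    ext z
    simp only [mem_inter_iff, mem_Iic, mem_Icc, le_min_iff]
    tauto
  rw [Measure.restrict_apply measurableSet_Iic, hinter, Real.volume_Icc, sub_zero]

theorem measure_map_prodComm_Iic :
    μ.map (Homeomorph.prodComm ℝ ℝ) (Iic (x, y)) = μ (Iic (y, x)) := by
  rw [Measure.map_apply (Homeomorph.prodComm ℝ ℝ).continuous.measurable measurableSet_Iic]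
  exact congrArg μ (ext fun _ ↦ and_comm)

theorem discrepancy_map_prodComm :
    discrepancy (μ.map (Homeomorph.prodComm ℝ ℝ)) x y = discrepancy μ y x := by
  rw [discrepancy, discrepancy, Measure.real, measure_map_prodComm_Iic, ← Measure.real, mul_comm]

theorem isPermuton_of_fst_eq_of_snd_eq (hfst : μ.fst = volume.restrict (Icc 0 1))
    (hsnd : μ.snd = volume.restrict (Icc 0 1)) : IsPermuton μ := by
  have hvol {a b : ℝ} (ha : 0 ≤ a) (hb : b ≤ 1) :
      volume.restrict (Icc (0 : ℝ) 1) (Icc a b) = ENNReal.ofReal (b - a) := by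
    rw [Measure.restrict_eq_self _ (Icc_subset_Icc ha hb), Real.volume_Icc]
  have hIcc : (Icc (0 : ℝ) 1 : Set ℝ) =ᵐ[volume.restrict (Icc 0 1)] univ :=
    eventuallyEq_univ.2 (self_mem_ae_restrict measurableSet_Icc)
  have hIcc_fst : (Icc (0 : ℝ) 1 : Set ℝ) =ᵐ[μ.fst] univ := hfst ▸ hIcc
  have hIcc_snd : (Icc (0 : ℝ) 1 : Set ℝ) =ᵐ[μ.snd] univ := hsnd ▸ hIcc
  refine ⟨⟨?_⟩, fun a b ha _ hb ↦ ?_, fun a b ha _ hb ↦ ?_⟩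
  · rw [← Measure.fst_univ, hfst, ← measure_congr hIcc, hvol le_rfl le_rfl, sub_zero,
      ENNReal.ofReal_one]
  · refine (measure_congr (prod_ae_eq_of_fst_of_snd (ae_eq_refl _) hIcc_snd)).trans ?_
    rw [prod_univ, ← Measure.fst_apply measurableSet_Icc, hfst, hvol ha hb]
  · refine (measure_congr (prod_ae_eq_of_fst_of_snd hIcc_fst (ae_eq_refl _))).trans ?_
    rw [univ_prod, ← Measure.snd_apply measurableSet_Icc, hsnd, hvol ha hb]

theorem isPermuton_uniformPermuton : IsPermuton uniformPermuton := by
  have hprob : IsProbabilityMeasure (volume.restrict (Icc (0 : ℝ) 1)) := ⟨by simp⟩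
  rw [uniformPermuton, Measure.volume_eq_prod, ← Measure.prod_restrict]
  exact isPermuton_of_fst_eq_of_snd_eq Measure.fst_prod Measure.snd_prod

/-- The reflection `(x, y) ↦ (x, 1 - y)` of the plane, a symmetry of the unit square. -/
noncomputable def reflectSnd : ℝ × ℝ ≃ₜ ℝ × ℝ :=
  (Homeomorph.refl ℝ).prodCongr (Homeomorph.subLeft 1)

theorem reflectSnd_symm_apply (p : ℝ × ℝ) : reflectSnd.symm p = (p.1, 1 - p.2) :=
  Prod.ext rfl (neg_add_eq_sub p.2 1)

namespace IsPermuton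

theorem unitSquare_mem_ae (hμ : IsPermuton μ) : Icc (0 : ℝ) 1 ×ˢ Icc (0 : ℝ) 1 ∈ ae μ := by
  have := hμ.1
  refine (mem_ae_iff_prob_eq_one (measurableSet_Icc.prod measurableSet_Icc)).2 ?_
  rw [hμ.2.1 0 1 le_rfl zero_le_one le_rfl, sub_zero, ENNReal.ofReal_one]

theorem Icc_mem_ae_fst (hμ : IsPermuton μ) : Icc (0 : ℝ) 1 ∈ ae μ.fst :=
  (mem_ae_map_iff measurable_fst.aemeasurable measurableSet_Icc).2
    (mem_of_superset hμ.unitSquare_mem_ae fun _ hp ↦ hp.1)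

theorem Icc_mem_ae_snd (hμ : IsPermuton μ) : Icc (0 : ℝ) 1 ∈ ae μ.snd :=
  (mem_ae_map_iff measurable_snd.aemeasurable measurableSet_Icc).2
    (mem_of_superset hμ.unitSquare_mem_ae fun _ hp ↦ hp.2)

theorem fst_eq (hμ : IsPermuton μ) : μ.fst = volume.restrict (Icc 0 1) := by
  have := hμ.1
  refine measure_eq_restrict_Icc hμ.Icc_mem_ae_fst fun a b ha hab hb ↦ ?_
  rw [← hμ.2.1 a b ha hab hb, Measure.fst_apply measurableSet_Icc, ← prod_univ]
  exact measure_congr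
    (prod_ae_eq_of_fst_of_snd (ae_eq_refl _) (eventuallyEq_univ.2 hμ.Icc_mem_ae_snd).symm)

theorem snd_eq (hμ : IsPermuton μ) : μ.snd = volume.restrict (Icc 0 1) := by
  have := hμ.1
  refine measure_eq_restrict_Icc hμ.Icc_mem_ae_snd fun a b ha hab hb ↦ ?_
  rw [← hμ.2.2 a b ha hab hb, Measure.snd_apply measurableSet_Icc, ← univ_prod]
  exact measure_congr
    (prod_ae_eq_of_fst_of_snd (eventuallyEq_univ.2 hμ.Icc_mem_ae_fst).symm (ae_eq_refl _))

theorem nullSingletonClass_fst (hμ : IsPermuton μ) : NullSingletonClass μ.fst := by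
  rw [hμ.fst_eq]; infer_instance

theorem nullSingletonClass_snd (hμ : IsPermuton μ) : NullSingletonClass μ.snd := by
  rw [hμ.snd_eq]; infer_instance

theorem map_prodComm (hμ : IsPermuton μ) : IsPermuton (μ.map (Homeomorph.prodComm ℝ ℝ)) :=
  isPermuton_of_fst_eq_of_snd_eq (Measure.fst_map_swap.trans hμ.snd_eq)
    (Measure.snd_map_swap.trans hμ.fst_eq)

theorem map_reflectSnd (hμ : IsPermuton μ) : IsPermuton (μ.map reflectSnd) := by
  have hmeas : Measurable reflectSnd := reflectSnd.continuous.measurable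
  have hsub : MeasurePreserving (fun y : ℝ ↦ 1 - y) (volume.restrict (Icc 0 1))
      (volume.restrict (Icc 0 1)) := by
    simpa using (Measure.measurePreserving_sub_left volume (1 : ℝ)).restrict_preimage
      (measurableSet_Icc (a := 0) (b := 1))
  refine isPermuton_of_fst_eq_of_snd_eq ?_ ?_
  · rw [Measure.fst, Measure.map_map measurable_fst hmeas]
    exact hμ.fst_eq
  · rw [Measure.snd, Measure.map_map measurable_snd hmeas, ← hsub.map_eq, ← hμ.snd_eq,
      Measure.snd, Measure.map_map hsub.measurable measurable_snd]
    rfl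

theorem support_subset (hμ : IsPermuton μ) : μ.support ⊆ Icc (0 : ℝ) 1 ×ˢ Icc (0 : ℝ) 1 :=
  Measure.support_subset_of_isClosed (isClosed_Icc.prod isClosed_Icc) hμ.unitSquare_mem_ae

theorem isCompact_support (hμ : IsPermuton μ) : IsCompact μ.support :=
  (isCompact_Icc.prod isCompact_Icc).of_isClosed_subset Measure.isClosed_support hμ.support_subset

theorem exists_mem_support_of_fst (hμ : IsPermuton μ) (hx : x ∈ Icc (0 : ℝ) 1) :
    ∃ y, (x, y) ∈ μ.support := by
  have hx' : x ∈ μ.fst.support := hμ.fst_eq ▸ Icc_subset_support_restrict_Icc zero_ne_one hx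
  obtain ⟨⟨_, y⟩, hp, rfl⟩ := support_map_subset_image continuous_fst hμ.isCompact_support hx'
  exact ⟨y, hp⟩

theorem measure_Iic_of_fst_nonpos (hμ : IsPermuton μ) (hx : x ≤ 0) : μ (Iic (x, y)) = 0 := by
  have hfst : μ.fst (Iic x) = 0 := by
    rw [hμ.fst_eq, measure_restrict_Icc_zero_one_Iic, min_eq_left (hx.trans zero_le_one),
      ENNReal.ofReal_of_nonpos hx]
  rw [Measure.fst_apply measurableSet_Iic] at hfst
  exact measure_mono_null (fun _ hp ↦ hp.1) hfst

theorem measure_Iic_of_one_le_fst (hμ : IsPermuton μ) (hx : 1 ≤ x) :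
    μ (Iic (x, y)) = ENNReal.ofReal (min y 1) := by
  have hIic : (Iic x : Set ℝ) =ᵐ[μ.fst] univ :=
    eventuallyEq_univ.2 (mem_of_superset hμ.Icc_mem_ae_fst fun _ hz ↦ hz.2.trans hx)
  rw [← Iic_prod_Iic]
  refine (measure_congr (prod_ae_eq_of_fst_of_snd hIic (ae_eq_refl _))).trans ?_
  rw [univ_prod, ← Measure.snd_apply measurableSet_Iic, hμ.snd_eq,
    measure_restrict_Icc_zero_one_Iic]

theorem measure_Iic_of_snd_nonpos (hμ : IsPermuton μ) (hy : y ≤ 0) : μ (Iic (x, y)) = 0 := by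
  rw [← measure_map_prodComm_Iic, hμ.map_prodComm.measure_Iic_of_fst_nonpos hy]

theorem measure_Iic_of_one_le_snd (hμ : IsPermuton μ) (hy : 1 ≤ y) :
    μ (Iic (x, y)) = ENNReal.ofReal (min x 1) := by
  rw [← measure_map_prodComm_Iic, hμ.map_prodComm.measure_Iic_of_one_le_fst hy]

theorem discrepancy_zero_left (hμ : IsPermuton μ) : discrepancy μ 0 y = 0 := by
  rw [discrepancy, Measure.real, hμ.measure_Iic_of_fst_nonpos le_rfl, ENNReal.toReal_zero,
    zero_mul, sub_zero]

theorem discrepancy_zero_right (hμ : IsPermuton μ) : discrepancy μ x 0 = 0 := by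
  rw [discrepancy, Measure.real, hμ.measure_Iic_of_snd_nonpos le_rfl, ENNReal.toReal_zero,
    mul_zero, sub_zero]

theorem discrepancy_one_left (hμ : IsPermuton μ) (hy : y ∈ Icc (0 : ℝ) 1) :
    discrepancy μ 1 y = 0 := by
  rw [discrepancy, Measure.real, hμ.measure_Iic_of_one_le_fst le_rfl, min_eq_left hy.2,
    ENNReal.toReal_ofReal hy.1, one_mul, sub_self]

theorem discrepancy_one_right (hμ : IsPermuton μ) (hx : x ∈ Icc (0 : ℝ) 1) :
    discrepancy μ x 1 = 0 := by
  rw [discrepancy, Measure.real, hμ.measure_Iic_of_one_le_snd le_rfl, min_eq_left hx.2,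
    ENNReal.toReal_ofReal hx.1, mul_one, sub_self]

theorem ext_of_discrepancy (hμ : IsPermuton μ) (hν : IsPermuton ν)
    (h : ∀ x ∈ Ioo (0 : ℝ) 1, ∀ y ∈ Ioo (0 : ℝ) 1, discrepancy μ x y = discrepancy ν x y) :
    μ = ν := by
  have := hμ.1
  have := hν.1
  refine measure_prod_ext_of_Iic fun ⟨x, y⟩ ↦ ?_
  rcases le_or_gt x 0 with hx₀ | hx₀
  · rw [hμ.measure_Iic_of_fst_nonpos hx₀, hν.measure_Iic_of_fst_nonpos hx₀]
  rcases le_or_gt y 0 with hy₀ | hy₀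
  · rw [hμ.measure_Iic_of_snd_nonpos hy₀, hν.measure_Iic_of_snd_nonpos hy₀]
  rcases le_or_gt 1 x with hx₁ | hx₁
  · rw [hμ.measure_Iic_of_one_le_fst hx₁, hν.measure_Iic_of_one_le_fst hx₁]
  rcases le_or_gt 1 y with hy₁ | hy₁
  · rw [hμ.measure_Iic_of_one_le_snd hy₁, hν.measure_Iic_of_one_le_snd hy₁]
  · have hxy := h x ⟨hx₀, hx₁⟩ y ⟨hy₀, hy₁⟩
    rw [discrepancy, discrepancy, sub_left_inj] at hxy
    rwa [← measureReal_eq_measureReal_iff]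

theorem discrepancy_map_reflectSnd (hμ : IsPermuton μ) (hx : x ∈ Icc (0 : ℝ) 1) :
    discrepancy (μ.map reflectSnd) x y = -discrepancy μ x (1 - y) := by
  have := hμ.1
  have := hμ.nullSingletonClass_snd
  have hunion : μ.real (Iic x ×ˢ univ)
      = μ.real (Iic (x, 1 - y)) + μ.real (Iic x ×ˢ Ioi (1 - y)) := by
    rw [← Iic_union_Ioi (a := 1 - y), prod_union, ← Iic_prod_Iic,
      measureReal_union ((Iic_disjoint_Ioi le_rfl).set_prod_right _ _)
        (measurableSet_Iic.prod measurableSet_Ioi)]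
  have hmarginal : μ.real (Iic x ×ˢ univ) = x := by
    rw [prod_univ, Measure.real, ← Measure.fst_apply measurableSet_Iic, hμ.fst_eq,
      measure_restrict_Icc_zero_one_Iic, min_eq_left hx.2, ENNReal.toReal_ofReal hx.1]
  have hmap : (μ.map reflectSnd).real (Iic (x, y)) = μ.real (Iic x ×ˢ Ioi (1 - y)) := by
    rw [map_measureReal_apply reflectSnd.continuous.measurable measurableSet_Iic]
    have hpre : reflectSnd ⁻¹' Iic (x, y) = Iic x ×ˢ Ici (1 - y) := by
      ext p
      exact and_congr_right' sub_le_comm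
    rw [hpre]
    exact measureReal_congr (prod_ae_eq_of_fst_of_snd (ae_eq_refl _) Ioi_ae_eq_Ici.symm)
  unfold discrepancy
  linear_combination hmap + hmarginal - hunion

theorem measureReal_Icc_prod_Icc (hμ : IsPermuton μ) (hx : x₁ ≤ x₂) (hy : y₁ ≤ y₂) :
    μ.real (Icc x₁ x₂ ×ˢ Icc y₁ y₂) = discrepancy μ x₂ y₂ - discrepancy μ x₁ y₂
      - discrepancy μ x₂ y₁ + discrepancy μ x₁ y₁ + (x₂ - x₁) * (y₂ - y₁) := by
  have := hμ.1
  have := hμ.nullSingletonClass_fst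
  have := hμ.nullSingletonClass_snd
  rw [← measureReal_Ioc_prod_Ioc hx hy]
  exact measureReal_congr (prod_ae_eq_of_fst_of_snd Ioc_ae_eq_Icc.symm Ioc_ae_eq_Icc.symm)

theorem discrepancy_rect_of_disjoint (hμ : IsPermuton μ) (hx : x₁ ≤ x₂) (hy : y₁ ≤ y₂)
    (hdisj : Disjoint (Ioo x₁ x₂ ×ˢ Ioo y₁ y₂) μ.support) :
    discrepancy μ x₂ y₂ - discrepancy μ x₁ y₂ - discrepancy μ x₂ y₁ + discrepancy μ x₁ y₁
      = -((x₂ - x₁) * (y₂ - y₁)) := by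
  have := hμ.1
  have := hμ.nullSingletonClass_fst
  have := hμ.nullSingletonClass_snd
  have hnull : μ.real (Ioc x₁ x₂ ×ˢ Ioc y₁ y₂) = 0 := by
    rw [measureReal_congr (prod_ae_eq_of_fst_of_snd Ioo_ae_eq_Ioc.symm Ioo_ae_eq_Ioc.symm),
      measureReal_eq_zero_iff]
    exact measure_mono_null hdisj.subset_compl_right Measure.measure_compl_support
  linear_combination hnull - measureReal_Ioc_prod_Ioc (μ := μ) hx hy

theorem discrepancy_le_add (hμ : IsPermuton μ) (hx₁ : 0 ≤ x₁) (hx : x₁ ≤ x₂) (hx₂ : x₂ ≤ 1)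
    (hy : y ≤ 1) : discrepancy μ x₂ y ≤ discrepancy μ x₁ y + (x₂ - x₁) * (1 - y) := by
  have := hμ.1
  have hmass := measureReal_Ioc_prod_Ioc (μ := μ) hx hy
  rw [hμ.discrepancy_one_right ⟨hx₁, hx.trans hx₂⟩,
    hμ.discrepancy_one_right ⟨hx₁.trans hx, hx₂⟩] at hmass
  linarith [measureReal_nonneg (μ := μ) (s := Ioc x₁ x₂ ×ˢ Ioc y 1)]

theorem discrepancy_eq_of_upperLeft_disjoint (hμ : IsPermuton μ) (hx : x ∈ Icc (0 : ℝ) 1)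
    (hy : y ≤ 1) (hdisj : Disjoint (Iio x ×ˢ Ioi y) μ.support) :
    discrepancy μ x y = x * (1 - y) := by
  have hrect := hμ.discrepancy_rect_of_disjoint hx.1 hy
    (hdisj.mono_left (prod_mono Ioo_subset_Iio_self Ioo_subset_Ioi_self))
  rw [hμ.discrepancy_one_right hx, hμ.discrepancy_zero_left, hμ.discrepancy_zero_left] at hrect
  linarith

theorem discrepancy_eq_of_upperRight_disjoint (hμ : IsPermuton μ) (hx : x ∈ Icc (0 : ℝ) 1)
    (hy : y ∈ Icc (0 : ℝ) 1) (hdisj : Disjoint (Ioi x ×ˢ Ioi y) μ.support) :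
    discrepancy μ x y = -((1 - x) * (1 - y)) := by
  have hrect := hμ.discrepancy_rect_of_disjoint hx.2 hy.2
    (hdisj.mono_left (prod_mono Ioo_subset_Ioi_self Ioo_subset_Ioi_self))
  rw [hμ.discrepancy_one_right hx, hμ.discrepancy_one_left ⟨zero_le_one, le_rfl⟩,
    hμ.discrepancy_one_left hy] at hrect
  linarith

theorem discrepancy_eq_of_lowerRight_disjoint (hμ : IsPermuton μ) (hx : x ≤ 1)
    (hy : y ∈ Icc (0 : ℝ) 1) (hdisj : Disjoint (Ioi x ×ˢ Iio y) μ.support) :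
    discrepancy μ x y = (1 - x) * y := by
  have hrect := hμ.discrepancy_rect_of_disjoint hx hy.1
    (hdisj.mono_left (prod_mono Ioo_subset_Ioi_self Ioo_subset_Iio_self))
  rw [hμ.discrepancy_one_left hy, hμ.discrepancy_zero_right, hμ.discrepancy_zero_right] at hrect
  linarith

end IsPermuton

theorem discrepancy_uniformPermuton (hx : x ∈ Icc (0 : ℝ) 1) (hy : y ∈ Icc (0 : ℝ) 1) :
    discrepancy uniformPermuton x y = 0 := by
  have hmarginal {z : ℝ} (hz : z ∈ Icc (0 : ℝ) 1) :
      (volume.restrict (Icc (0 : ℝ) 1)).real (Iic z) = z := by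
    rw [Measure.real, measure_restrict_Icc_zero_one_Iic, min_eq_left hz.2,
      ENNReal.toReal_ofReal hz.1]
  rw [discrepancy, uniformPermuton, Measure.volume_eq_prod, ← Measure.prod_restrict,
    ← Iic_prod_Iic, measureReal_prod_prod, hmarginal hx, hmarginal hy, sub_self]

/-- A permuton whose mass agrees with the area on every rectangle spanned by two points of its
support. -/
structure IsSupportUniform (μ : Measure (ℝ × ℝ)) : Prop where
  isPermuton : IsPermuton μ
  measure_rect : ∀ p ∈ μ.support, ∀ q ∈ μ.support,
    μ (uIcc p.1 q.1 ×ˢ uIcc p.2 q.2) = ENNReal.ofReal (|q.1 - p.1| * |q.2 - p.2|)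

namespace IsSupportUniform

theorem map_prodComm (hμ : IsSupportUniform μ) :
    IsSupportUniform (μ.map (Homeomorph.prodComm ℝ ℝ)) where
  isPermuton := hμ.isPermuton.map_prodComm
  measure_rect p hp q hq := by
    rw [mem_support_map_homeomorph] at hp hq
    rw [(Homeomorph.prodComm ℝ ℝ).measurableEmbedding.map_apply, Homeomorph.coe_prodComm,
      preimage_swap_prod, mul_comm]
    exact hμ.measure_rect _ hp _ hq

theorem map_reflectSnd (hμ : IsSupportUniform μ) : IsSupportUniform (μ.map reflectSnd) where
  isPermuton := hμ.isPermuton.map_reflectSnd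
  measure_rect p hp q hq := by
    rw [mem_support_map_homeomorph, reflectSnd_symm_apply] at hp hq
    have hpre : reflectSnd ⁻¹' (uIcc p.1 q.1 ×ˢ uIcc p.2 q.2)
        = uIcc p.1 q.1 ×ˢ uIcc (1 - p.2) (1 - q.2) := by
      rw [← preimage_const_sub_uIcc]
      rfl
    have hsub : |(1 - q.2) - (1 - p.2)| = |q.2 - p.2| := by
      rw [sub_sub_sub_cancel_left, abs_sub_comm]
    rw [reflectSnd.measurableEmbedding.map_apply, hpre, ← hsub]
    exact hμ.measure_rect _ hp _ hq

theorem discrepancy_rect (hμ : IsSupportUniform μ) (h₁ : (x₁, y₁) ∈ μ.support)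
    (h₂ : (x₂, y₂) ∈ μ.support) :
    discrepancy μ x₂ y₂ - discrepancy μ x₁ y₂ - discrepancy μ x₂ y₁ + discrepancy μ x₁ y₁ = 0 := by
  have hmass : μ.real (uIcc x₁ x₂ ×ˢ uIcc y₁ y₂) = |x₂ - x₁| * |y₂ - y₁| := by
    rw [Measure.real, hμ.measure_rect _ h₁ _ h₂, ENNReal.toReal_ofReal (by positivity)]
  rcases le_total x₁ x₂ with hx | hx <;> rcases le_total y₁ y₂ with hy | hy <;>
    simp only [uIcc_of_le, uIcc_of_ge, abs_of_nonneg, abs_of_nonpos, sub_nonneg, sub_nonpos, hx, hy,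
      hμ.isPermuton.measureReal_Icc_prod_Icc hx hy] at hmass <;>
    linarith

theorem exists_discrepancy_eq_snd (hμ : IsSupportUniform μ) :
    ∃ a ∈ Icc (0 : ℝ) 1, ∀ x y, (x, y) ∈ μ.support → discrepancy μ x y = discrepancy μ x a := by
  have hperm := hμ.isPermuton
  obtain ⟨a, ha⟩ := hperm.exists_mem_support_of_fst ⟨le_rfl, zero_le_one⟩
  refine ⟨a, (hperm.support_subset ha).2, fun x y hxy ↦ ?_⟩
  have hrect := hμ.discrepancy_rect ha hxy
  rw [hperm.discrepancy_zero_left, hperm.discrepancy_zero_left] at hrect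
  linarith

theorem discrepancy_eq_of_fst (hμ : IsSupportUniform μ) (h₁ : (x, y₁) ∈ μ.support)
    (h₂ : (x, y₂) ∈ μ.support) : discrepancy μ x y₁ = discrepancy μ x y₂ := by
  obtain ⟨a, -, ha⟩ := hμ.exists_discrepancy_eq_snd
  rw [ha x y₁ h₁, ha x y₂ h₂]

theorem discrepancy_eq_of_snd (hμ : IsSupportUniform μ) (h₁ : (x₁, y) ∈ μ.support)
    (h₂ : (x₂, y) ∈ μ.support) : discrepancy μ x₁ y = discrepancy μ x₂ y := by
  simpa only [discrepancy_map_prodComm] using hμ.map_prodComm.discrepancy_eq_of_fst (x := y)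
    ((mem_support_map_homeomorph _).2 h₁) ((mem_support_map_homeomorph _).2 h₂)

theorem snd_eq_of_disjoint (hμ : IsSupportUniform μ) (h₁ : (x₁, y₁) ∈ μ.support)
    (h₂ : (x₂, y₂) ∈ μ.support) (hx : x₁ < x₂)
    (hdisj : Disjoint (Ioo x₁ x₂ ×ˢ uIoo y₁ y₂) μ.support) : y₁ = y₂ := by
  have hperm := hμ.isPermuton
  have hrect := hμ.discrepancy_rect h₁ h₂
  suffices (x₂ - x₁) * (y₂ - y₁) = 0 from
    (sub_eq_zero.1 ((mul_eq_zero_iff_left (sub_ne_zero.2 hx.ne')).1 this)).symm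
  rcases le_total y₁ y₂ with hy | hy
  · rw [uIoo_of_le hy] at hdisj
    linarith [hperm.discrepancy_rect_of_disjoint hx.le hy hdisj]
  · rw [uIoo_of_ge hy] at hdisj
    linarith [hperm.discrepancy_rect_of_disjoint hx.le hy hdisj]

theorem snd_eq_one_of_disjoint (hμ : IsSupportUniform μ) (h₁ : (x₁, y₁) ∈ μ.support)
    (h₂ : (x₂, y₂) ∈ μ.support) (hx : x₁ < x₂) (hy₁ : y ≤ y₁) (hy₂ : y ≤ y₂)
    (hdisj : Disjoint (Ioo x₁ x₂ ×ˢ Ici y) μ.support) : y₁ = 1 := by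
  have hperm := hμ.isPermuton
  obtain ⟨hx₁, -, hy₁'⟩ := hperm.support_subset h₁
  obtain rfl : y₁ = y₂ := hμ.snd_eq_of_disjoint h₁ h₂ hx
    (hdisj.mono_left (prod_mono_right fun z hz ↦ (le_min hy₁ hy₂).trans hz.1.le))
  have hrect := hperm.discrepancy_rect_of_disjoint hx.le hy₁'
    (hdisj.mono_left (prod_mono_right fun z hz ↦ hy₁.trans hz.1.le))
  rw [hperm.discrepancy_one_right (hperm.support_subset h₂).1, hperm.discrepancy_one_right hx₁,
    hμ.discrepancy_eq_of_snd h₁ h₂] at hrect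
  have harea : (x₂ - x₁) * (1 - y₁) = 0 := by linarith
  exact (sub_eq_zero.1 ((mul_eq_zero_iff_left (sub_ne_zero.2 hx.ne')).1 harea)).symm

theorem exists_mk_one_mem_support (hμ : IsSupportUniform μ) (hcol : ∀ z, y ≤ z → (x, z) ∉ μ.support)
    (h₁ : (x₁, y₁) ∈ μ.support) (h₂ : (x₂, y₂) ∈ μ.support) (hx₁ : x₁ < x) (hx₂ : x < x₂)
    (hy₁ : y ≤ y₁) (hy₂ : y ≤ y₂) :
    ∃ u v, x₁ ≤ u ∧ u < x ∧ x < v ∧ (u, 1) ∈ μ.support ∧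
      Disjoint (Ioo u v ×ˢ Ici y) μ.support := by
  have hK : IsCompact (Prod.fst '' (μ.support ∩ univ ×ˢ Ici y)) :=
    (hμ.isPermuton.isCompact_support.inter_right (isClosed_univ.prod isClosed_Ici)).image
      continuous_fst
  obtain ⟨_, ⟨⟨u, a⟩, ⟨hua, -, ha⟩, rfl⟩, _, ⟨⟨v, b⟩, ⟨hvb, -, hb⟩, rfl⟩, hxu, hux, hxv, hgap⟩ :=
    exists_disjoint_Ioo_of_notMem hK ⟨_, ⟨h₁, trivial, hy₁⟩, rfl⟩ ⟨_, ⟨h₂, trivial, hy₂⟩, rfl⟩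
      hx₁ hx₂ fun ⟨⟨_, z⟩, ⟨hp, _, hz⟩, hxz⟩ ↦ hcol z hz (hxz ▸ hp)
  have hdisj : Disjoint (Ioo u v ×ˢ Ici y) μ.support :=
    disjoint_left.2 fun p hp hpS ↦ disjoint_left.1 hgap hp.1 ⟨p, ⟨hpS, trivial, hp.2⟩, rfl⟩
  obtain rfl : a = 1 := hμ.snd_eq_one_of_disjoint hua hvb (hux.trans hxv) ha hb hdisj
  exact ⟨u, v, hxu, hux, hxv, hua, hdisj⟩

theorem upperLeft_or_upperRight_disjoint (hμ : IsSupportUniform μ) (hxy : (x, y) ∈ μ.support)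
    (htop : ∀ z, y < z → (x, z) ∉ μ.support) :
    Disjoint (Iio x ×ˢ Ioi y) μ.support ∨ Disjoint (Ioi x ×ˢ Ioi y) μ.support := by
  by_contra! hne
  obtain ⟨⟨l₁, l₂⟩, ⟨hl₁, hl₂⟩, hl⟩ := not_disjoint_iff.1 hne.1
  obtain ⟨⟨r₁, r₂⟩, ⟨hr₁, hr₂⟩, hr⟩ := not_disjoint_iff.1 hne.2
  have hcol {a : ℝ} (ha : y < a) (z : ℝ) (hz : min a r₂ ≤ z) : (x, z) ∉ μ.support :=
    htop z ((lt_min ha hr₂).trans_le hz)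
  obtain ⟨u, v, -, hux, hxv, hu, hstrip⟩ := hμ.exists_mk_one_mem_support (hcol hl₂) hl hr hl₁ hr₁
    (min_le_left _ _) (min_le_right _ _)
  have hy : y < 1 := hl₂.trans_le (hμ.isPermuton.support_subset hl).2.2
  have hrect : ¬Disjoint (Ioo u x ×ˢ uIoo 1 y) μ.support := fun hdisj ↦
    hy.ne' (hμ.snd_eq_of_disjoint hu hxy hux hdisj)
  rw [uIoo_of_ge hy.le] at hrect
  obtain ⟨⟨q₁, q₂⟩, ⟨hq₁, hq₂⟩, hq⟩ := not_disjoint_iff.1 hrect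
  obtain ⟨u', -, hqu', hu'x, -, hu', -⟩ := hμ.exists_mk_one_mem_support (hcol hq₂.1) hq hr
    hq₁.2 hr₁ (min_le_left _ _) (min_le_right _ _)
  have hlt : (1 : ℝ) ∈ Ici (min l₂ r₂) :=
    (min_le_left _ _).trans (hμ.isPermuton.support_subset hl).2.2
  exact disjoint_left.1 hstrip ⟨⟨hq₁.1.trans_le hqu', hu'x.trans hxv⟩, hlt⟩ hu'

theorem exists_mem_support_upper_disjoint (hμ : IsSupportUniform μ) (hx : x ∈ Icc (0 : ℝ) 1) :
    ∃ t, (x, t) ∈ μ.support ∧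
      (Disjoint (Iio x ×ˢ Ioi t) μ.support ∨ Disjoint (Ioi x ×ˢ Ioi t) μ.support) := by
  have hperm := hμ.isPermuton
  obtain ⟨y, hy⟩ := hperm.exists_mem_support_of_fst hx
  obtain ⟨⟨_, t⟩, ⟨ht, rfl⟩, hmax⟩ := (hperm.isCompact_support.inter_right
    (isClosed_singleton.preimage continuous_fst : IsClosed (Prod.fst ⁻¹' {x}))).exists_isMaxOn
    ⟨(x, y), hy, rfl⟩ continuous_snd.continuousOn
  exact ⟨t, ht, hμ.upperLeft_or_upperRight_disjoint ht
    fun z hz hz' ↦ (hmax ⟨hz', rfl⟩ : z ≤ t).not_gt hz⟩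

theorem exists_mem_support_lower_disjoint (hμ : IsSupportUniform μ) (hx : x ∈ Icc (0 : ℝ) 1) :
    ∃ b, (x, b) ∈ μ.support ∧
      (Disjoint (Iio x ×ˢ Iio b) μ.support ∨ Disjoint (Ioi x ×ˢ Iio b) μ.support) := by
  obtain ⟨t, ht, hdisj⟩ := hμ.map_reflectSnd.exists_mem_support_upper_disjoint hx
  rw [mem_support_map_homeomorph, reflectSnd_symm_apply] at ht
  have hlower (s : Set ℝ) (h : Disjoint (s ×ˢ Ioi t) (μ.map reflectSnd).support) :
      Disjoint (s ×ˢ Iio (1 - t)) μ.support :=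
    disjoint_left.2 fun p hp hpS ↦ disjoint_left.1 h
      (⟨hp.1, (lt_sub_comm.1 hp.2 : t < 1 - p.2)⟩ : reflectSnd p ∈ s ×ˢ Ioi t)
      (mem_support_map_of_continuous reflectSnd.continuous hpS)
  exact ⟨1 - t, ht, hdisj.imp (hlower _) (hlower _)⟩

theorem exists_upperRight_disjoint_of_neg (hμ : IsSupportUniform μ) (hxy : (x, y) ∈ μ.support)
    (hneg : discrepancy μ x y < 0) :
    ∃ t, (x, t) ∈ μ.support ∧ Disjoint (Ioi x ×ˢ Ioi t) μ.support := by
  have hperm := hμ.isPermuton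
  have hx := (hperm.support_subset hxy).1
  obtain ⟨t, ht, hleft | hright⟩ := hμ.exists_mem_support_upper_disjoint hx
  · have ht₁ := (hperm.support_subset ht).2.2
    rw [hμ.discrepancy_eq_of_fst hxy ht,
      hperm.discrepancy_eq_of_upperLeft_disjoint hx ht₁ hleft] at hneg
    exact absurd hneg (mul_nonneg hx.1 (sub_nonneg.2 ht₁)).not_gt
  · exact ⟨t, ht, hright⟩

theorem exists_lowerLeft_disjoint_of_neg (hμ : IsSupportUniform μ) (hxy : (x, y) ∈ μ.support)
    (hneg : discrepancy μ x y < 0) :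
    ∃ b, (x, b) ∈ μ.support ∧ Disjoint (Iio x ×ˢ Iio b) μ.support := by
  have hperm := hμ.isPermuton
  have hx := (hperm.support_subset hxy).1
  obtain ⟨b, hb, hleft | hright⟩ := hμ.exists_mem_support_lower_disjoint hx
  · exact ⟨b, hb, hleft⟩
  · have hb₀ := (hperm.support_subset hb).2
    rw [hμ.discrepancy_eq_of_fst hxy hb,
      hperm.discrepancy_eq_of_lowerRight_disjoint hx.2 hb₀ hright] at hneg
    exact absurd hneg (mul_nonneg (sub_nonneg.2 hx.2) hb₀.1).not_gt

theorem exists_gt_discrepancy_neg (hμ : IsSupportUniform μ) (hxy : (x, y) ∈ μ.support)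
    (hneg : discrepancy μ x y < 0) :
    ∃ x' y', x < x' ∧ (x', y') ∈ μ.support ∧ discrepancy μ x' y' < 0 := by
  have hperm := hμ.isPermuton
  obtain ⟨a, ha, hcol⟩ := hμ.exists_discrepancy_eq_snd
  rw [hcol x y hxy] at hneg
  obtain ⟨hx₀, hx₁⟩ := (hperm.support_subset hxy).1
  have hx₁' : x < 1 := hx₁.lt_of_ne (by
    rintro rfl
    exact hneg.ne (hperm.discrepancy_one_left ha))
  obtain ⟨x', hxx', hx'⟩ := exists_between
    (lt_min hx₁' (lt_sub_comm.1 (hneg.trans_eq (sub_self x).symm)))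
  obtain ⟨hx'₁, hx'a⟩ := lt_min_iff.1 hx'
  obtain ⟨y', hy'⟩ := hperm.exists_mem_support_of_fst ⟨hx₀.trans hxx'.le, hx'₁.le⟩
  refine ⟨x', y', hxx', hy', ?_⟩
  calc discrepancy μ x' y' = discrepancy μ x' a := hcol x' y' hy'
    _ ≤ discrepancy μ x a + (x' - x) * (1 - a) :=
      hperm.discrepancy_le_add hx₀ hxx'.le hx'₁.le ha.2
    _ ≤ discrepancy μ x a + (x' - x) := by
      gcongr
      exact mul_le_of_le_one_right (sub_nonneg.2 hxx'.le) (sub_le_self 1 ha.1)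
    _ < 0 := by linarith

theorem discrepancy_nonneg (hμ : IsSupportUniform μ) (hxy : (x, y) ∈ μ.support) :
    0 ≤ discrepancy μ x y := by
  by_contra! hneg
  have hperm := hμ.isPermuton
  obtain ⟨x', y', hxx', hxy', hneg'⟩ := hμ.exists_gt_discrepancy_neg hxy hneg
  obtain ⟨t, ht, hright⟩ := hμ.exists_upperRight_disjoint_of_neg hxy hneg
  obtain ⟨b, hb, hleft⟩ := hμ.exists_lowerLeft_disjoint_of_neg hxy' hneg'
  have hx := (hperm.support_subset ht).1
  have ht₁ := (hperm.support_subset ht).2.2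
  have hb₀ := (hperm.support_subset hb).2.1
  have hupper := hperm.discrepancy_rect_of_disjoint hxx'.le ht₁
    (hright.mono_left (prod_mono Ioo_subset_Ioi_self Ioo_subset_Ioi_self))
  have hlower := hperm.discrepancy_rect_of_disjoint hxx'.le hb₀
    (hleft.mono_left (prod_mono Ioo_subset_Iio_self Ioo_subset_Iio_self))
  rw [hperm.discrepancy_one_right hx,
    hperm.discrepancy_one_right (hperm.support_subset hb).1] at hupper
  rw [hperm.discrepancy_zero_right, hperm.discrepancy_zero_right] at hlower
  have harea : (x' - x) * (b + (1 - t)) = 0 := by linarith [hμ.discrepancy_rect ht hb]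
  have hheight : b + (1 - t) = 0 := (mul_eq_zero_iff_left (sub_ne_zero.2 hxx'.ne')).1 harea
  obtain rfl : t = 1 := by linarith
  exact hneg.ne ((hμ.discrepancy_eq_of_fst hxy ht).trans (hperm.discrepancy_one_right hx))

theorem discrepancy_eq_zero (hμ : IsSupportUniform μ) (hxy : (x, y) ∈ μ.support) :
    discrepancy μ x y = 0 := by
  have hmem : (x, 1 - y) ∈ (μ.map reflectSnd).support :=
    mem_support_map_of_continuous reflectSnd.continuous hxy
  have hreflect := hμ.map_reflectSnd.discrepancy_nonneg hmem
  rw [hμ.isPermuton.discrepancy_map_reflectSnd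
    (hμ.isPermuton.support_subset hxy).1, sub_sub_cancel] at hreflect
  exact le_antisymm (neg_nonneg.1 hreflect) (hμ.discrepancy_nonneg hxy)

theorem mk_one_mem_support (hμ : IsSupportUniform μ) (hx : x ∈ Ioo (0 : ℝ) 1) :
    (x, 1) ∈ μ.support := by
  have hperm := hμ.isPermuton
  have hx' := Ioo_subset_Icc_self hx
  obtain ⟨t, ht, hdisj⟩ := hμ.exists_mem_support_upper_disjoint hx'
  have ht' := (hperm.support_subset ht).2
  have hzero := hμ.discrepancy_eq_zero ht
  suffices t = 1 from this ▸ ht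
  rcases hdisj with hleft | hright
  · rw [hperm.discrepancy_eq_of_upperLeft_disjoint hx' ht'.2 hleft,
      mul_eq_zero_iff_left hx.1.ne'] at hzero
    exact (sub_eq_zero.1 hzero).symm
  · rw [hperm.discrepancy_eq_of_upperRight_disjoint hx' ht' hright, neg_eq_zero,
      mul_eq_zero_iff_left (sub_ne_zero.2 hx.2.ne')] at hzero
    exact (sub_eq_zero.1 hzero).symm

theorem one_mk_mem_support (hμ : IsSupportUniform μ) (hy : y ∈ Ioo (0 : ℝ) 1) :
    (1, y) ∈ μ.support :=
  (mem_support_map_homeomorph _).1 (hμ.map_prodComm.mk_one_mem_support hy)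

theorem eq_uniformPermuton (hμ : IsSupportUniform μ) : μ = uniformPermuton := by
  have hperm := hμ.isPermuton
  refine hperm.ext_of_discrepancy isPermuton_uniformPermuton fun x hx y hy ↦ ?_
  have hx' := Ioo_subset_Icc_self hx
  have hy' := Ioo_subset_Icc_self hy
  have hrect := hμ.discrepancy_rect (hμ.mk_one_mem_support hx) (hμ.one_mk_mem_support hy)
  rw [hperm.discrepancy_one_left hy', hperm.discrepancy_one_right hx',
    hperm.discrepancy_one_left ⟨zero_le_one, le_rfl⟩] at hrect
  rw [discrepancy_uniformPermuton hx' hy']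
  linarith

end IsSupportUniform

end

theorem statement_2 (μ : Measure (ℝ × ℝ)) (hμ : IsPermuton μ)
    (h : ∀ p ∈ measSupport μ, ∀ q ∈ measSupport μ,
      μ (Set.Icc (min p.1 q.1) (max p.1 q.1) ×ˢ Set.Icc (min p.2 q.2) (max p.2 q.2)) =
        ENNReal.ofReal (|q.1 - p.1| * |q.2 - p.2|)) :
    μ = uniformPermuton := by
  rw [measSupport_eq_support] at h
  exact IsSupportUniform.eq_uniformPermuton ⟨hμ, h⟩
end
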